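/- arXiv:1702.08193 — 4 statements merged into one kernel-verified Lean document; each statement's English description precedes it below -/
import Mathlib

section
/- For every 𝒜 ⊆ {M, C, N}, the linear nested sequent calculus LNS_E𝒜ConW is complete with respect to the non-normal modal logic E𝒜: if A ∈ E𝒜 then the linear nested sequent ⇒ A is derivable in LNS_E𝒜ConW. -/
/-- Monomodal formulas. -/
inductive Fm : Type
  | var : ℕ → Fm
  | bot : Fm
  | top : Fm
  | neg : Fm → Fm
  | and : Fm → Fm → Fm
  | or : Fm → Fm → Fm
  | imp : Fm → Fm → Fm
  | box : Fm → Fm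

/-- Evaluation of the propositional structure of a formula under an assignment
`v` of truth values to formulas (only used on atoms, i.e. propositional
variables and boxed formulas). -/
def evalP (v : Fm → Prop) : Fm → Prop
  | .var n => v (.var n)
  | .bot => False
  | .top => True
  | .neg A => ¬ evalP v A
  | .and A B => evalP v A ∧ evalP v B
  | .or A B => evalP v A ∨ evalP v B
  | .imp A B => evalP v A → evalP v B
  | .box A => v (.box A)

/-- `A` is an instance of a classical propositional tautology. -/
def Taut (A : Fm) : Prop := ∀ v, evalP v A

/-- A component of a (linear nested) sequent: a two-sided multiset sequent. -/
abbrev Cmp := Multiset Fm × Multiset Fm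

/-- A set `𝒜 ⊆ {M, C, N}` of additional axioms for classical modal logic `E`. -/
structure EAx where
  m : Bool := false
  c : Bool := false
  n : Bool := false

/-- Hilbert-style theoremhood in the non-normal modal logic `E𝒜`: classical
propositional logic, the congruence rule, and the axioms among
`M : □(A∧B) → (□A ∧ □B)`, `C : (□A ∧ □B) → □(A∧B)` and `N : □⊤` in `𝒜`. -/
inductive EThm (Ax : EAx) : Fm → Prop
  | taut {A} : Taut A → EThm Ax A
  | mp {A B} : EThm Ax (.imp A B) → EThm Ax A → EThm Ax B
  | cong {A B} : EThm Ax (.imp A B) → EThm Ax (.imp B A) →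
      EThm Ax (.imp (.box A) (.box B))
  | axM {A B} : Ax.m = true →
      EThm Ax (.imp (.box (.and A B)) (.and (.box A) (.box B)))
  | axC {A B} : Ax.c = true →
      EThm Ax (.imp (.and (.box A) (.box B)) (.box (.and A B)))
  | axN : Ax.n = true → EThm Ax (.box .top)

/-- A linear nested sequent of type `LNS^e`: a (nonempty) list of components
joined by the nesting `⫽`, optionally terminated by a binary nesting
`⫽ᵉ(Σ ⇒ Π; Ω ⇒ Θ)`. -/
abbrev LNSe := List Cmp × Option (Cmp × Cmp)

/-- The linear nested sequent calculus `LNS_E𝒜` for non-normal modal logics,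
optionally extended with internal contraction (`con`) and weakening (`wk`):
classical propositional rules applied in any component (but not inside `⫽ᵉ`),
the modal rules `□_R^e` and `□_L^e`, and the rules `N`, `M`, `C` for the
corresponding axioms in `𝒜`. -/
inductive ED (Ax : EAx) (con wk : Bool) : LNSe → Prop
  | init {pre post : List Cmp} {ep} {Γ Δ : Multiset Fm} {m : ℕ} :
      ED Ax con wk (pre ++ (Fm.var m ::ₘ Γ, Fm.var m ::ₘ Δ) :: post, ep)
  | botL {pre post ep Γ Δ} :
      ED Ax con wk (pre ++ (Fm.bot ::ₘ Γ, Δ) :: post, ep)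
  | topR {pre post ep Γ Δ} :
      ED Ax con wk (pre ++ (Γ, Fm.top ::ₘ Δ) :: post, ep)
  | negL {pre post ep Γ Δ A} :
      ED Ax con wk (pre ++ (Γ, A ::ₘ Δ) :: post, ep) →
      ED Ax con wk (pre ++ (Fm.neg A ::ₘ Γ, Δ) :: post, ep)
  | negR {pre post ep Γ Δ A} :
      ED Ax con wk (pre ++ (A ::ₘ Γ, Δ) :: post, ep) →
      ED Ax con wk (pre ++ (Γ, Fm.neg A ::ₘ Δ) :: post, ep)
  | andL {pre post ep Γ Δ A B} :
      ED Ax con wk (pre ++ (A ::ₘ B ::ₘ Γ, Δ) :: post, ep) →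
      ED Ax con wk (pre ++ (Fm.and A B ::ₘ Γ, Δ) :: post, ep)
  | andR {pre post ep Γ Δ A B} :
      ED Ax con wk (pre ++ (Γ, A ::ₘ Δ) :: post, ep) →
      ED Ax con wk (pre ++ (Γ, B ::ₘ Δ) :: post, ep) →
      ED Ax con wk (pre ++ (Γ, Fm.and A B ::ₘ Δ) :: post, ep)
  | orL {pre post ep Γ Δ A B} :
      ED Ax con wk (pre ++ (A ::ₘ Γ, Δ) :: post, ep) →
      ED Ax con wk (pre ++ (B ::ₘ Γ, Δ) :: post, ep) →
      ED Ax con wk (pre ++ (Fm.or A B ::ₘ Γ, Δ) :: post, ep)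
  | orR {pre post ep Γ Δ A B} :
      ED Ax con wk (pre ++ (Γ, A ::ₘ B ::ₘ Δ) :: post, ep) →
      ED Ax con wk (pre ++ (Γ, Fm.or A B ::ₘ Δ) :: post, ep)
  | impL {pre post ep Γ Δ A B} :
      ED Ax con wk (pre ++ (B ::ₘ Γ, Δ) :: post, ep) →
      ED Ax con wk (pre ++ (Γ, A ::ₘ Δ) :: post, ep) →
      ED Ax con wk (pre ++ (Fm.imp A B ::ₘ Γ, Δ) :: post, ep)
  | impR {pre post ep Γ Δ A B} :
      ED Ax con wk (pre ++ (A ::ₘ Γ, B ::ₘ Δ) :: post, ep) →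
      ED Ax con wk (pre ++ (Γ, Fm.imp A B ::ₘ Δ) :: post, ep)
  | conL {pre post ep Γ Δ A} : con = true →
      ED Ax con wk (pre ++ (A ::ₘ A ::ₘ Γ, Δ) :: post, ep) →
      ED Ax con wk (pre ++ (A ::ₘ Γ, Δ) :: post, ep)
  | conR {pre post ep Γ Δ A} : con = true →
      ED Ax con wk (pre ++ (Γ, A ::ₘ A ::ₘ Δ) :: post, ep) →
      ED Ax con wk (pre ++ (Γ, A ::ₘ Δ) :: post, ep)
  | wkL {pre post ep Γ Δ A} : wk = true →
      ED Ax con wk (pre ++ (Γ, Δ) :: post, ep) →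
      ED Ax con wk (pre ++ (A ::ₘ Γ, Δ) :: post, ep)
  | wkR {pre post ep Γ Δ A} : wk = true →
      ED Ax con wk (pre ++ (Γ, Δ) :: post, ep) →
      ED Ax con wk (pre ++ (Γ, A ::ₘ Δ) :: post, ep)
  | boxRe {G Γ Δ B} :
      ED Ax con wk (G ++ [(Γ, Δ)], some ((0, {B}), ({B}, 0))) →
      ED Ax con wk (G ++ [(Γ, Fm.box B ::ₘ Δ)], none)
  | boxLe {G Γ Δ Sg Pp Om Th A} :
      ED Ax con wk (G ++ [(Γ, Δ), (A ::ₘ Sg, Pp)], none) →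
      ED Ax con wk (G ++ [(Γ, Δ), (Om, A ::ₘ Th)], none) →
      ED Ax con wk (G ++ [(Fm.box A ::ₘ Γ, Δ)], some ((Sg, Pp), (Om, Th)))
  | ruleN {G Γ Δ B} : Ax.n = true →
      ED Ax con wk (G ++ [(Γ, Δ), (0, {B})], none) →
      ED Ax con wk (G ++ [(Γ, Fm.box B ::ₘ Δ)], none)
  | ruleM {c G Sg Pp Om Th} : Ax.m = true →
      ED Ax con wk (c :: G, some ((Sg, Pp), (Fm.bot ::ₘ Om, Th))) →
      ED Ax con wk (c :: G, some ((Sg, Pp), (Om, Th)))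
  | ruleC {G Γ Δ Sg Pp Om Th A} : Ax.c = true →
      ED Ax con wk (G ++ [(Γ, Δ)], some ((A ::ₘ Sg, Pp), (Om, Th))) →
      ED Ax con wk (G ++ [(Γ, Δ), (Om, A ::ₘ Th)], none) →
      ED Ax con wk (G ++ [(Fm.box A ::ₘ Γ, Δ)], some ((Sg, Pp), (Om, Th)))

/-!
By weakening and contraction, derivability of a sequent depends only on the set of formulas on
either side, so an underivable sequent extends to a maximal consistent set of signed formulas.
These sets are the worlds of a canonical bi-neighbourhood model: a neighbourhood of `w` is given by
finitely many formulas `A` with `□A` on the left of `w`, and consists of the worlds having every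
such `A` on the left, paired with the worlds having some such `A` on the right. The modal rules say
exactly that `□B` on the right of `w` excludes such a neighbourhood for `B`. No cut is involved,
hence a world need not decide every formula and the truth lemma only gives implications.
-/

/-- A bi-neighbourhood model on `W`. A neighbourhood `(α, β)` of a world is a pair of positive and
negative support for a necessity: `□A` holds if `α` lies inside and `β` outside the truth set of
`A`. -/
structure BiNbhdModel (W : Type*) where
  nbhd : W → Set (Set W × Set W)
  val : ℕ → Set W

namespace BiNbhdModel

variable {W : Type*}

/-- The set of worlds at which a formula is true. -/
def truth (M : BiNbhdModel W) : Fm → Set W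
  | .var n => M.val n
  | .bot => ∅
  | .top => Set.univ
  | .neg A => (M.truth A)ᶜ
  | .and A B => M.truth A ∩ M.truth B
  | .or A B => M.truth A ∪ M.truth B
  | .imp A B => {w | w ∈ M.truth A → w ∈ M.truth B}
  | .box A => {w | ∃ p ∈ M.nbhd w, p.1 ⊆ M.truth A ∧ Disjoint p.2 (M.truth A)}

/-- The frame conditions corresponding to the axioms in `Ax`. -/
structure Satisfies (M : BiNbhdModel W) (Ax : EAx) : Prop where
  snd_eq_empty : Ax.m = true → ∀ {w p}, p ∈ M.nbhd w → p.2 = ∅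
  inter_union_mem : Ax.c = true → ∀ {w p q}, p ∈ M.nbhd w → q ∈ M.nbhd w →
    (p.1 ∩ q.1, p.2 ∪ q.2) ∈ M.nbhd w
  univ_empty_mem : Ax.n = true → ∀ w, (Set.univ, ∅) ∈ M.nbhd w

theorem evalP_iff_mem_truth (M : BiNbhdModel W) (w : W) (A : Fm) :
    evalP (fun B => w ∈ M.truth B) A ↔ w ∈ M.truth A := by
  induction A with
  | var | bot | top | box => exact Iff.rfl
  | neg A ih => exact not_congr ih
  | and A B ihA ihB => exact and_congr ihA ihB
  | or A B ihA ihB => exact or_congr ihA ihB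
  | imp A B ihA ihB => exact imp_congr ihA ihB

theorem Satisfies.mem_truth_of_thm {M : BiNbhdModel W} {Ax : EAx} (hM : M.Satisfies Ax) {A : Fm}
    (h : EThm Ax A) (w : W) : w ∈ M.truth A := by
  induction h generalizing w with
  | taut h => exact (M.evalP_iff_mem_truth w _).1 (h _)
  | mp _ _ ihAB ihA => exact ihAB w (ihA w)
  | @cong A B _ _ ihAB ihBA =>
    have truth_eq : M.truth A = M.truth B := Set.Subset.antisymm ihAB ihBA
    change w ∈ M.truth A.box → w ∈ M.truth B.box
    simp only [truth, truth_eq, imp_self]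
  | axM hm =>
    rintro ⟨p, hp, hsub, -⟩
    have disjoint_snd (X : Set W) : Disjoint p.2 X := by
      simp only [hM.snd_eq_empty hm hp, Set.empty_disjoint]
    exact ⟨⟨p, hp, fun u hu => (hsub hu).1, disjoint_snd _⟩,
      ⟨p, hp, fun u hu => (hsub hu).2, disjoint_snd _⟩⟩
  | axC hc =>
    rintro ⟨⟨p, hp, hpA, hpA'⟩, ⟨q, hq, hqB, hqB'⟩⟩
    exact ⟨_, hM.inter_union_mem hc hp hq, Set.inter_subset_inter hpA hqB,
      Set.disjoint_union_left.2
        ⟨hpA'.mono_right Set.inter_subset_left, hqB'.mono_right Set.inter_subset_right⟩⟩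
  | axN hn => exact ⟨_, hM.univ_empty_mem hn w, subset_rfl, Set.empty_disjoint _⟩

end BiNbhdModel

/-- A formula marked with the side of a sequent on which it occurs. -/
inductive Signed : Type
  | left : Fm → Signed
  | right : Fm → Signed

namespace Signed

/-- Insertion of a signed formula into a sequent. -/
def addTo : Signed → Cmp → Cmp
  | left A, S => (A ::ₘ S.1, S.2)
  | right A, S => (S.1, A ::ₘ S.2)

theorem addTo_add (s : Signed) (S T : Cmp) : s.addTo S + T = s.addTo (S + T) := by
  cases s <;> simp [addTo, Prod.ext_iff]

theorem add_addTo (s : Signed) (S T : Cmp) : S + s.addTo T = s.addTo (S + T) := by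
  rw [add_comm, addTo_add, add_comm]

end Signed

/-- The signed formulas occurring in a sequent, forgetting multiplicities. -/
def signedSet (S : Cmp) : Set Signed :=
  {s | match s with
    | .left A => A ∈ S.1
    | .right A => A ∈ S.2}

theorem left_mem_signedSet {A : Fm} {S : Cmp} : .left A ∈ signedSet S ↔ A ∈ S.1 := Iff.rfl

theorem right_mem_signedSet {A : Fm} {S : Cmp} : .right A ∈ signedSet S ↔ A ∈ S.2 := Iff.rfl

theorem signedSet_subset_iff {S : Cmp} {X : Set Signed} :
    signedSet S ⊆ X ↔ (∀ A ∈ S.1, .left A ∈ X) ∧ ∀ A ∈ S.2, .right A ∈ X := by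
  refine ⟨fun h => ⟨fun A hA => h hA, fun A hA => h hA⟩, ?_⟩
  rintro ⟨hl, hr⟩ (A | A) hA
  exacts [hl A hA, hr A hA]

theorem signedSet_addTo (s : Signed) (S : Cmp) :
    signedSet (s.addTo S) = insert s (signedSet S) := by
  ext (A | A) <;> cases s <;> simp [left_mem_signedSet, right_mem_signedSet, Signed.addTo]

theorem signedSet_add (S T : Cmp) : signedSet (S + T) = signedSet S ∪ signedSet T := by
  ext (A | A) <;> exact Multiset.mem_add

theorem exists_eq_addTo_of_mem {s : Signed} {S : Cmp} (h : s ∈ signedSet S) :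
    ∃ T, S = s.addTo T := by
  obtain A | A := s
  · obtain ⟨Γ, hΓ⟩ := Multiset.exists_cons_of_mem (left_mem_signedSet.1 h)
    exact ⟨(Γ, S.2), Prod.ext hΓ rfl⟩
  · obtain ⟨Δ, hΔ⟩ := Multiset.exists_cons_of_mem (right_mem_signedSet.1 h)
    exact ⟨(S.1, Δ), Prod.ext rfl hΔ⟩

theorem Cmp.addTo_induction {P : Cmp → Prop} (zero : P 0)
    (addTo : ∀ (s : Signed) S, P S → P (s.addTo S)) (S : Cmp) : P S := by
  obtain ⟨Γ, Δ⟩ := S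
  induction Γ using Multiset.induction with
  | cons A Γ ih => exact addTo (.left A) _ ih
  | empty =>
    induction Δ using Multiset.induction with
    | empty => exact zero
    | cons A Δ ih => exact addTo (.right A) _ ih

theorem signedSet_finite (S : Cmp) : (signedSet S).Finite := by
  induction S using Cmp.addTo_induction with
  | zero => exact Set.finite_empty.subset (signedSet_subset_iff.2 (by simp))
  | addTo s S ih => exact signedSet_addTo s S ▸ ih.insert s

/-- Derivability as the last component after an arbitrary list of components. Quantifying over the
list lets a derivation be used in the component created by a modal rule. -/
def Derivable (Ax : EAx) (con wk : Bool) (S : Cmp) : Prop :=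
  ∀ G : List Cmp, ED Ax con wk (G ++ [S], none)

namespace Derivable

variable {Ax : EAx} {con wk : Bool} {S T : Cmp}

theorem nest (h : Derivable Ax con wk S) (G : List Cmp) (C : Cmp) :
    ED Ax con wk (G ++ [C, S], none) := by
  simpa using h (G ++ [C])

theorem weaken (h : Derivable Ax con true S) (s : Signed) : Derivable Ax con true (s.addTo S) := by
  cases s
  · exact fun G => ED.wkL rfl (h G)
  · exact fun G => ED.wkR rfl (h G)

theorem contract {s : Signed} (h : Derivable Ax true wk (s.addTo (s.addTo S))) :
    Derivable Ax true wk (s.addTo S) := by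
  cases s
  · exact fun G => ED.conL rfl (h G)
  · exact fun G => ED.conR rfl (h G)

theorem weaken_add (h : Derivable Ax con true S) (T : Cmp) : Derivable Ax con true (T + S) := by
  induction T using Cmp.addTo_induction with
  | zero => rwa [zero_add]
  | addTo s T ih => exact Signed.addTo_add s T S ▸ ih.weaken s

theorem contract_add (h : Derivable Ax true wk (T + S)) (hTS : signedSet T ⊆ signedSet S) :
    Derivable Ax true wk S := by
  induction T using Cmp.addTo_induction with
  | zero => rwa [zero_add] at h
  | addTo s T ih =>
    rw [signedSet_addTo, Set.insert_subset_iff] at hTS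
    obtain ⟨S, rfl⟩ := exists_eq_addTo_of_mem hTS.1
    refine ih ?_ hTS.2
    rw [Signed.addTo_add, Signed.add_addTo] at h
    exact Signed.add_addTo s T S ▸ h.contract

theorem mono (h : Derivable Ax true true S) (hST : signedSet S ⊆ signedSet T) :
    Derivable Ax true true T :=
  (add_comm T S ▸ h.weaken_add T).contract_add hST

end Derivable

section Modal

variable {Ax : EAx} {con wk : Bool}

theorem ED.ruleM_append {G : List Cmp} {S : Cmp} {Sg Pp Om Th : Multiset Fm} (hm : Ax.m = true)
    (h : ED Ax con wk (G ++ [S], some ((Sg, Pp), (Fm.bot ::ₘ Om, Th)))) :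
    ED Ax con wk (G ++ [S], some ((Sg, Pp), (Om, Th))) := by
  cases G with
  | nil => exact ED.ruleM hm h
  | cons C G => exact ED.ruleM hm h

theorem ED.boxLe_multiset {As Sg Pp Om Th Γ Δ : Multiset Fm} (hne : As ≠ 0)
    (hc : 1 < As.card → Ax.c = true) (hpos : Derivable Ax con wk (As + Sg, Pp))
    (hneg : ∀ A ∈ As, Derivable Ax con wk (Om, A ::ₘ Th)) (G : List Cmp) :
    ED Ax con wk (G ++ [(As.map .box + Γ, Δ)], some ((Sg, Pp), (Om, Th))) := by
  induction As using Multiset.induction generalizing Sg with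
  | empty => exact (hne rfl).elim
  | cons A As ih =>
    rw [Multiset.map_cons, Multiset.cons_add]
    have hnegA := (hneg A (Multiset.mem_cons_self A As)).nest G (As.map .box + Γ, Δ)
    rw [Multiset.cons_add] at hpos
    rcases eq_or_ne As 0 with rfl | hAs
    · exact ED.boxLe ((zero_add Sg ▸ hpos).nest G _) hnegA
    · have card_pos : 0 < As.card := Multiset.card_pos.2 hAs
      have hC : Ax.c = true := hc (by rw [Multiset.card_cons]; omega)
      refine ED.ruleC hC (ih hAs (fun _ => hC) ?_ fun B hB => hneg B (Multiset.mem_cons_of_mem hB))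
        hnegA
      rwa [Multiset.add_cons]

/-- The number of boxed formulas that may be principal on the left of one block of modal rules. -/
def BoxArity (Ax : EAx) (n : ℕ) : Prop :=
  (n = 0 → Ax.n = true) ∧ (1 < n → Ax.c = true)

theorem Derivable.box {As : Multiset Fm} {B : Fm} (harity : BoxArity Ax As.card)
    (hpos : Derivable Ax con wk (As, {B}))
    (hneg : Ax.m = true ∨ ∀ A ∈ As, Derivable Ax con wk ({B}, {A})) :
    Derivable Ax con wk (As.map .box, {.box B}) := by
  intro G
  rcases eq_or_ne As 0 with rfl | hne
  · exact ED.ruleN (Δ := 0) (harity.1 rfl) (hpos.nest G _)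
  · apply ED.boxRe (Δ := 0)
    have hpos' : Derivable Ax con wk (As + 0, {B}) := by rwa [add_zero]
    rw [← add_zero (As.map Fm.box)]
    rcases hneg with hm | hneg
    · exact ED.ruleM_append hm
        (ED.boxLe_multiset hne harity.2 hpos' (fun _ _ _ => ED.botL) G)
    · exact ED.boxLe_multiset hne harity.2 hpos' hneg G

end Modal

/-- A set of signed formulas is inconsistent if it contains a derivable sequent. -/
def Inconsistent (Ax : EAx) (X : Set Signed) : Prop :=
  ∃ S, signedSet S ⊆ X ∧ Derivable Ax true true S

namespace Inconsistent

variable {Ax : EAx} {X : Set Signed}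

theorem mono {Y : Set Signed} (h : Inconsistent Ax X) (hXY : X ⊆ Y) : Inconsistent Ax Y :=
  let ⟨S, hS, d⟩ := h
  ⟨S, hS.trans hXY, d⟩

theorem derivable {S : Cmp} (h : Inconsistent Ax (signedSet S)) : Derivable Ax true true S :=
  let ⟨_, hS, d⟩ := h
  d.mono hS

theorem isOfFiniteCharacter_not (Ax : EAx) :
    Order.IsOfFiniteCharacter {X | ¬ Inconsistent Ax X} := by
  refine fun X => ⟨fun hX _ hYX _ hY => hX (hY.mono hYX), ?_⟩
  rintro hX ⟨S, hS, d⟩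
  exact hX (y := signedSet S) hS (signedSet_finite S) ⟨S, subset_rfl, d⟩

theorem exists_derivable_addTo {s : Signed} (h : Inconsistent Ax (insert s X)) :
    ∃ S, signedSet S ⊆ X ∧ Derivable Ax true true (s.addTo S) := by
  classical
  obtain ⟨S, hS, d⟩ := h
  let T : Cmp := (S.1.filter (.left · ∈ X), S.2.filter (.right · ∈ X))
  have mem_T (t : Signed) : t ∈ signedSet T ↔ t ∈ signedSet S ∧ t ∈ X := by
    cases t <;> exact Multiset.mem_filter
  refine ⟨T, fun t ht => ((mem_T t).1 ht).2, d.mono fun t ht => ?_⟩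
  rw [signedSet_addTo]
  exact (hS ht).imp_right fun htX => (mem_T t).2 ⟨ht, htX⟩

theorem of_beta {s s₁ s₂ : Signed}
    (rule : ∀ S, Derivable Ax true true (s₁.addTo S) → Derivable Ax true true (s₂.addTo S) →
      Derivable Ax true true (s.addTo S))
    (hs : s ∈ X) (h₁ : Inconsistent Ax (insert s₁ X)) (h₂ : Inconsistent Ax (insert s₂ X)) :
    Inconsistent Ax X := by
  obtain ⟨S₁, hS₁, d₁⟩ := h₁.exists_derivable_addTo
  obtain ⟨S₂, hS₂, d₂⟩ := h₂.exists_derivable_addTo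
  refine ⟨s.addTo (S₁ + S₂), ?_, rule _ (d₁.mono ?_) (d₂.mono ?_)⟩ <;>
    simp only [signedSet_addTo, signedSet_add]
  · exact Set.insert_subset hs (Set.union_subset hS₁ hS₂)
  · exact Set.insert_subset_insert Set.subset_union_left
  · exact Set.insert_subset_insert Set.subset_union_right

end Inconsistent

/-- A world of the canonical model: a maximal consistent set of signed formulas. -/
structure World (Ax : EAx) where
  carrier : Set Signed
  maximal : Maximal (fun X => ¬ Inconsistent Ax X) carrier

namespace World

open Signed

variable {Ax : EAx} {w : World Ax}

theorem not_derivable {S : Cmp} (h : signedSet S ⊆ w.carrier) : ¬ Derivable Ax true true S :=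
  fun d => w.maximal.prop ⟨S, h, d⟩

theorem exists_signedSet_subset {S : Cmp} (h : ¬ Derivable Ax true true S) :
    ∃ w : World Ax, signedSet S ⊆ w.carrier :=
  let ⟨X, hSX, hX⟩ := (Inconsistent.isOfFiniteCharacter_not Ax).exists_maximal
    (x := signedSet S) fun hS => h hS.derivable
  ⟨⟨X, hX⟩, hSX⟩

section Saturation

variable {s s₁ s₂ : Signed} {A B : Fm}

theorem inconsistent_insert (h : s ∉ w.carrier) : Inconsistent Ax (insert s w.carrier) := by
  by_contra hcon
  exact h (w.maximal.le_of_ge hcon (Set.subset_insert s _) (Set.mem_insert s _))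

theorem mem_or_mem_of_beta
    (rule : ∀ S, Derivable Ax true true (s₁.addTo S) → Derivable Ax true true (s₂.addTo S) →
      Derivable Ax true true (s.addTo S))
    (hs : s ∈ w.carrier) : s₁ ∈ w.carrier ∨ s₂ ∈ w.carrier := by
  by_contra! h
  exact w.maximal.prop (.of_beta rule hs (inconsistent_insert h.1) (inconsistent_insert h.2))

theorem mem_of_rule
    (rule : ∀ S, Derivable Ax true true (s₁.addTo S) → Derivable Ax true true (s.addTo S))
    (hs : s ∈ w.carrier) : s₁ ∈ w.carrier :=
  or_self_iff.1 (mem_or_mem_of_beta (fun S d _ => rule S d) hs)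

theorem mem_and_mem_of_alpha
    (rule : ∀ S, Derivable Ax true true (s₁.addTo (s₂.addTo S)) →
      Derivable Ax true true (s.addTo S))
    (hs : s ∈ w.carrier) : s₁ ∈ w.carrier ∧ s₂ ∈ w.carrier := by
  refine ⟨mem_of_rule (fun S d => rule S (d.mono ?_)) hs,
    mem_of_rule (fun S d => rule S (d.weaken s₁)) hs⟩
  simp only [signedSet_addTo]
  exact Set.insert_subset_insert (Set.subset_insert _ _)

theorem right_var_notMem {n : ℕ} (h : left (.var n) ∈ w.carrier) :
    right (.var n) ∉ w.carrier := fun h' =>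
  not_derivable (w := w) (S := ({.var n}, {.var n})) (signedSet_subset_iff.2 (by simp [h, h']))
    fun _ => ED.init (Γ := 0) (Δ := 0)

theorem left_bot_notMem : left .bot ∉ w.carrier := fun h =>
  not_derivable (w := w) (S := ({.bot}, 0)) (signedSet_subset_iff.2 (by simp [h]))
    fun _ => ED.botL (Γ := 0)

theorem right_top_notMem : right .top ∉ w.carrier := fun h =>
  not_derivable (w := w) (S := (0, {.top})) (signedSet_subset_iff.2 (by simp [h]))
    fun _ => ED.topR (Δ := 0)

theorem right_of_left_neg : left (.neg A) ∈ w.carrier → right A ∈ w.carrier :=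
  mem_of_rule fun _ d G => ED.negL (d G)

theorem left_of_right_neg : right (.neg A) ∈ w.carrier → left A ∈ w.carrier :=
  mem_of_rule fun _ d G => ED.negR (d G)

theorem left_and_left_of_left_and :
    left (.and A B) ∈ w.carrier → left A ∈ w.carrier ∧ left B ∈ w.carrier :=
  mem_and_mem_of_alpha fun _ d G => ED.andL (d G)

theorem right_or_right_of_right_and :
    right (.and A B) ∈ w.carrier → right A ∈ w.carrier ∨ right B ∈ w.carrier :=
  mem_or_mem_of_beta fun _ dA dB G => ED.andR (dA G) (dB G)

theorem left_or_left_of_left_or :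
    left (.or A B) ∈ w.carrier → left A ∈ w.carrier ∨ left B ∈ w.carrier :=
  mem_or_mem_of_beta fun _ dA dB G => ED.orL (dA G) (dB G)

theorem right_and_right_of_right_or :
    right (.or A B) ∈ w.carrier → right A ∈ w.carrier ∧ right B ∈ w.carrier :=
  mem_and_mem_of_alpha fun _ d G => ED.orR (d G)

theorem left_or_right_of_left_imp :
    left (.imp A B) ∈ w.carrier → left B ∈ w.carrier ∨ right A ∈ w.carrier :=
  mem_or_mem_of_beta fun _ dB dA G => ED.impL (dB G) (dA G)

theorem left_and_right_of_right_imp :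
    right (.imp A B) ∈ w.carrier → left A ∈ w.carrier ∧ right B ∈ w.carrier :=
  mem_and_mem_of_alpha fun _ d G => ED.impR (d G)

end Saturation

end World

section CanonicalModel

open Signed

variable {Ax : EAx} {w : World Ax} {B : Fm}

/-- The neighbourhood determined by the formulas `As`; its negative part is dropped in the presence
of the axiom `M`. -/
def canonicalNbhd (Ax : EAx) (As : Multiset Fm) : Set (World Ax) × Set (World Ax) :=
  ({u | ∀ A ∈ As, left A ∈ u.carrier},
    {u | Ax.m = false ∧ ∃ A ∈ As, right A ∈ u.carrier})

theorem canonicalNbhd_zero (Ax : EAx) : canonicalNbhd Ax 0 = (Set.univ, ∅) := by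
  simp [canonicalNbhd]

theorem canonicalNbhd_add (Ax : EAx) (As Bs : Multiset Fm) :
    canonicalNbhd Ax (As + Bs) =
      ((canonicalNbhd Ax As).1 ∩ (canonicalNbhd Ax Bs).1,
        (canonicalNbhd Ax As).2 ∪ (canonicalNbhd Ax Bs).2) := by
  ext u <;> simp only [canonicalNbhd, Multiset.mem_add, Set.mem_ofPred_eq, Set.mem_inter_iff,
    Set.mem_union] <;> grind

/-- The canonical bi-neighbourhood model of the calculus. -/
def canonicalModel (Ax : EAx) : BiNbhdModel (World Ax) where
  nbhd w := {p | ∃ As : Multiset Fm, BoxArity Ax As.card ∧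
    (∀ A ∈ As, left (.box A) ∈ w.carrier) ∧ canonicalNbhd Ax As = p}
  val n := {w | left (.var n) ∈ w.carrier}

theorem canonicalModel_satisfies (Ax : EAx) : (canonicalModel Ax).Satisfies Ax where
  snd_eq_empty := by
    rintro hm w p ⟨As, -, -, rfl⟩
    simp [canonicalNbhd, hm]
  inter_union_mem := by
    rintro hc w p q ⟨As, hAs, hAsw, rfl⟩ ⟨Bs, -, hBsw, rfl⟩
    refine ⟨As + Bs, ⟨fun h0 => hAs.1 ?_, fun _ => hc⟩, fun A hA => ?_, canonicalNbhd_add Ax As Bs⟩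
    · rw [Multiset.card_add] at h0
      omega
    · exact (Multiset.mem_add.1 hA).elim (hAsw A) (hBsw A)
  univ_empty_mem hn w :=
    ⟨0, ⟨fun _ => hn, by simp⟩, by simp, canonicalNbhd_zero Ax⟩

theorem mem_truth_box_of_left (hB : ∀ u : World Ax,
      (left B ∈ u.carrier → u ∈ (canonicalModel Ax).truth B) ∧
        (right B ∈ u.carrier → u ∉ (canonicalModel Ax).truth B))
    (h : left (.box B) ∈ w.carrier) : w ∈ (canonicalModel Ax).truth (.box B) := by
  refine ⟨_, ⟨{B}, by simp [BoxArity], by simpa using h, rfl⟩, fun u hu => (hB u).1 ?_, ?_⟩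
  · exact hu B (Multiset.mem_singleton_self B)
  · refine Set.disjoint_left.2 fun u ⟨_, A, hA, hAu⟩ => (hB u).2 ?_
    rwa [← Multiset.mem_singleton.1 hA]

theorem notMem_truth_box_of_right (hB : ∀ u : World Ax,
      (left B ∈ u.carrier → u ∈ (canonicalModel Ax).truth B) ∧
        (right B ∈ u.carrier → u ∉ (canonicalModel Ax).truth B))
    (h : right (.box B) ∈ w.carrier) : w ∉ (canonicalModel Ax).truth (.box B) := by
  rintro ⟨_, ⟨As, harity, hAs, rfl⟩, hsub, hdisj⟩
  have hpos : Derivable Ax true true (As, {B}) := by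
    by_contra hn
    obtain ⟨u, hu⟩ := World.exists_signedSet_subset hn
    rw [signedSet_subset_iff] at hu
    exact (hB u).2 (hu.2 B (Multiset.mem_singleton_self B)) (hsub hu.1)
  have hneg : Ax.m = true ∨ ∀ A ∈ As, Derivable Ax true true ({B}, {A}) := by
    refine or_iff_not_imp_left.2 fun hm A hA => ?_
    by_contra hn
    obtain ⟨u, hu⟩ := World.exists_signedSet_subset hn
    rw [signedSet_subset_iff] at hu
    exact Set.disjoint_left.1 hdisj
      ⟨Bool.eq_false_of_not_eq_true hm, A, hA, hu.2 A (Multiset.mem_singleton_self A)⟩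
      ((hB u).1 (hu.1 B (Multiset.mem_singleton_self B)))
  refine World.not_derivable (w := w) (signedSet_subset_iff.2 ?_) (.box harity hpos hneg)
  simpa using ⟨hAs, h⟩

theorem canonicalModel_truth (A : Fm) (w : World Ax) :
    (left A ∈ w.carrier → w ∈ (canonicalModel Ax).truth A) ∧
      (right A ∈ w.carrier → w ∉ (canonicalModel Ax).truth A) := by
  induction A generalizing w with
  | var n => exact ⟨id, fun h h' => World.right_var_notMem h' h⟩
  | bot => exact ⟨fun h => (World.left_bot_notMem h).elim, fun _ => id⟩
  | top => exact ⟨fun _ => trivial, fun h => (World.right_top_notMem h).elim⟩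
  | neg A ih =>
    exact ⟨fun h => (ih w).2 (World.right_of_left_neg h),
      fun h => not_not.2 ((ih w).1 (World.left_of_right_neg h))⟩
  | and A B ihA ihB =>
    exact ⟨fun h => (World.left_and_left_of_left_and h).imp (ihA w).1 (ihB w).1,
      fun h ⟨hA, hB⟩ => (World.right_or_right_of_right_and h).elim
        (fun hA' => (ihA w).2 hA' hA) (fun hB' => (ihB w).2 hB' hB)⟩
  | or A B ihA ihB =>
    refine ⟨fun h => (World.left_or_left_of_left_or h).imp (ihA w).1 (ihB w).1, fun h => ?_⟩
    obtain ⟨hA, hB⟩ := World.right_and_right_of_right_or h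
    exact not_or.2 ⟨(ihA w).2 hA, (ihB w).2 hB⟩
  | imp A B ihA ihB =>
    refine ⟨fun h hA => ?_, fun h hAB => ?_⟩
    · exact (World.left_or_right_of_left_imp h).elim (ihB w).1 fun hA' => ((ihA w).2 hA' hA).elim
    · obtain ⟨hA, hB⟩ := World.left_and_right_of_right_imp h
      exact (ihB w).2 hB (hAB ((ihA w).1 hA))
  | box B ih => exact ⟨mem_truth_box_of_left ih, notMem_truth_box_of_right ih⟩

theorem derivable_of_canonicalModel {S : Cmp}
    (h : ∀ w, (∀ A ∈ S.1, w ∈ (canonicalModel Ax).truth A) →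
      ∃ B ∈ S.2, w ∈ (canonicalModel Ax).truth B) :
    Derivable Ax true true S := by
  by_contra hn
  obtain ⟨w, hw⟩ := World.exists_signedSet_subset hn
  rw [signedSet_subset_iff] at hw
  obtain ⟨B, hBS, hB⟩ := h w fun A hA => (canonicalModel_truth A w).1 (hw.1 A hA)
  exact (canonicalModel_truth B w).2 (hw.2 B hBS) hB

end CanonicalModel

/-- Completeness of the linear nested sequent calculus `LNS_E𝒜ConW` for the
non-normal modal logic `E𝒜` (`𝒜 ⊆ {M, C, N}`): if `A ∈ E𝒜` then the linear
nested sequent `⇒ A` is derivable in `LNS_E𝒜ConW`. -/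
theorem LNSe_complete (Ax : EAx) (A : Fm) (h : EThm Ax A) :
    ED Ax true true ([(0, {A})], none) := by
  have mem_truth : ∀ w, w ∈ (canonicalModel Ax).truth A :=
    (canonicalModel_satisfies Ax).mem_truth_of_thm h
  have derivable : Derivable Ax true true (0, {A}) :=
    derivable_of_canonicalModel fun w _ => ⟨A, Multiset.mem_singleton_self A, mem_truth w⟩
  exact derivable []
end

section
/- For every 𝒜 ⊆ {M, C, N}, the weakening rules are depth-preserving admissible in LNS_E𝒜 and in LNS_E𝒜Con: if there is a derivation D of S{Γ ⇒ Δ} of depth at most n, then there are derivations D₁ of S{Γ, A ⇒ Δ} and D₂ of S{Γ ⇒ A, Δ} of depth at most n in the same system; moreover, if the level of the active components of every rule application in D is at least k, then the same holds for D₁ and D₂. -/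
/-- Derivability in the calculus `LNS_E𝒜` (with internal contraction if
`con = true`), indexed by resources: `EDn Ax con d k G` holds iff there is a
derivation of `G` of depth at most `d` in which the level of the active
components of every rule application is at least `k`.  (The level of the
`i`-th component of a linear nested sequent is `i`, counting from `1`.) -/
inductive EDn (Ax : EAx) (con : Bool) : ℕ → ℕ → LNSe → Prop
  | mono {d d' k k' G} : EDn Ax con d k G → d ≤ d' → k' ≤ k → EDn Ax con d' k' G
  | init {pre post : List Cmp} {ep} {Γ Δ : Multiset Fm} {m d k : ℕ} :
      k ≤ pre.length + 1 →
      EDn Ax con (d + 1) k (pre ++ (Fm.var m ::ₘ Γ, Fm.var m ::ₘ Δ) :: post, ep)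
  | botL {pre post ep Γ Δ} {d k : ℕ} : k ≤ pre.length + 1 →
      EDn Ax con (d + 1) k (pre ++ (Fm.bot ::ₘ Γ, Δ) :: post, ep)
  | topR {pre post ep Γ Δ} {d k : ℕ} : k ≤ pre.length + 1 →
      EDn Ax con (d + 1) k (pre ++ (Γ, Fm.top ::ₘ Δ) :: post, ep)
  | negL {pre post ep Γ Δ A} {d k : ℕ} : k ≤ pre.length + 1 →
      EDn Ax con d k (pre ++ (Γ, A ::ₘ Δ) :: post, ep) →
      EDn Ax con (d + 1) k (pre ++ (Fm.neg A ::ₘ Γ, Δ) :: post, ep)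
  | negR {pre post ep Γ Δ A} {d k : ℕ} : k ≤ pre.length + 1 →
      EDn Ax con d k (pre ++ (A ::ₘ Γ, Δ) :: post, ep) →
      EDn Ax con (d + 1) k (pre ++ (Γ, Fm.neg A ::ₘ Δ) :: post, ep)
  | andL {pre post ep Γ Δ A B} {d k : ℕ} : k ≤ pre.length + 1 →
      EDn Ax con d k (pre ++ (A ::ₘ B ::ₘ Γ, Δ) :: post, ep) →
      EDn Ax con (d + 1) k (pre ++ (Fm.and A B ::ₘ Γ, Δ) :: post, ep)
  | andR {pre post ep Γ Δ A B} {d k : ℕ} : k ≤ pre.length + 1 →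
      EDn Ax con d k (pre ++ (Γ, A ::ₘ Δ) :: post, ep) →
      EDn Ax con d k (pre ++ (Γ, B ::ₘ Δ) :: post, ep) →
      EDn Ax con (d + 1) k (pre ++ (Γ, Fm.and A B ::ₘ Δ) :: post, ep)
  | orL {pre post ep Γ Δ A B} {d k : ℕ} : k ≤ pre.length + 1 →
      EDn Ax con d k (pre ++ (A ::ₘ Γ, Δ) :: post, ep) →
      EDn Ax con d k (pre ++ (B ::ₘ Γ, Δ) :: post, ep) →
      EDn Ax con (d + 1) k (pre ++ (Fm.or A B ::ₘ Γ, Δ) :: post, ep)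
  | orR {pre post ep Γ Δ A B} {d k : ℕ} : k ≤ pre.length + 1 →
      EDn Ax con d k (pre ++ (Γ, A ::ₘ B ::ₘ Δ) :: post, ep) →
      EDn Ax con (d + 1) k (pre ++ (Γ, Fm.or A B ::ₘ Δ) :: post, ep)
  | impL {pre post ep Γ Δ A B} {d k : ℕ} : k ≤ pre.length + 1 →
      EDn Ax con d k (pre ++ (B ::ₘ Γ, Δ) :: post, ep) →
      EDn Ax con d k (pre ++ (Γ, A ::ₘ Δ) :: post, ep) →
      EDn Ax con (d + 1) k (pre ++ (Fm.imp A B ::ₘ Γ, Δ) :: post, ep)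
  | impR {pre post ep Γ Δ A B} {d k : ℕ} : k ≤ pre.length + 1 →
      EDn Ax con d k (pre ++ (A ::ₘ Γ, B ::ₘ Δ) :: post, ep) →
      EDn Ax con (d + 1) k (pre ++ (Γ, Fm.imp A B ::ₘ Δ) :: post, ep)
  | conL {pre post ep Γ Δ A} {d k : ℕ} : con = true → k ≤ pre.length + 1 →
      EDn Ax con d k (pre ++ (A ::ₘ A ::ₘ Γ, Δ) :: post, ep) →
      EDn Ax con (d + 1) k (pre ++ (A ::ₘ Γ, Δ) :: post, ep)
  | conR {pre post ep Γ Δ A} {d k : ℕ} : con = true → k ≤ pre.length + 1 →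
      EDn Ax con d k (pre ++ (Γ, A ::ₘ A ::ₘ Δ) :: post, ep) →
      EDn Ax con (d + 1) k (pre ++ (Γ, A ::ₘ Δ) :: post, ep)
  | boxRe {G Γ Δ B} {d k : ℕ} : k ≤ G.length + 1 →
      EDn Ax con d k (G ++ [(Γ, Δ)], some ((0, {B}), ({B}, 0))) →
      EDn Ax con (d + 1) k (G ++ [(Γ, Fm.box B ::ₘ Δ)], none)
  | boxLe {G Γ Δ Sg Pp Om Th A} {d k : ℕ} : k ≤ G.length + 1 →
      EDn Ax con d k (G ++ [(Γ, Δ), (A ::ₘ Sg, Pp)], none) →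
      EDn Ax con d k (G ++ [(Γ, Δ), (Om, A ::ₘ Th)], none) →
      EDn Ax con (d + 1) k (G ++ [(Fm.box A ::ₘ Γ, Δ)], some ((Sg, Pp), (Om, Th)))
  | ruleN {G Γ Δ B} {d k : ℕ} : Ax.n = true → k ≤ G.length + 1 →
      EDn Ax con d k (G ++ [(Γ, Δ), (0, {B})], none) →
      EDn Ax con (d + 1) k (G ++ [(Γ, Fm.box B ::ₘ Δ)], none)
  | ruleM {c G Sg Pp Om Th} {d k : ℕ} : Ax.m = true → k ≤ G.length + 2 →
      EDn Ax con d k (c :: G, some ((Sg, Pp), (Fm.bot ::ₘ Om, Th))) →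
      EDn Ax con (d + 1) k (c :: G, some ((Sg, Pp), (Om, Th)))
  | ruleC {G Γ Δ Sg Pp Om Th A} {d k : ℕ} : Ax.c = true → k ≤ G.length + 1 →
      EDn Ax con d k (G ++ [(Γ, Δ)], some ((A ::ₘ Sg, Pp), (Om, Th))) →
      EDn Ax con d k (G ++ [(Γ, Δ), (Om, A ::ₘ Th)], none) →
      EDn Ax con (d + 1) k (G ++ [(Fm.box A ::ₘ Γ, Δ)], some ((Sg, Pp), (Om, Th)))

/-!
To weaken a single component one would have to compare its position with that of the active
component in every rule. Weakening all components simultaneously avoids this: every rule carries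
arbitrary side formulae in the components it acts on, so enlarging its conclusion enlarges its
premises in the same way. At a modal rule, a component newly opened in a premise inherits the
weakening of the part of the binary nesting it comes from, or stays as it is.
-/

theorem exists_cons_of_cons_le {α : Type*} {a : α} {s t : Multiset α} (h : a ::ₘ s ≤ t) :
    ∃ u, t = a ::ₘ u ∧ s ≤ u := by
  obtain ⟨u, rfl⟩ := Multiset.exists_cons_of_mem (Multiset.mem_of_le h (Multiset.mem_cons_self a s))
  exact ⟨u, rfl, (Multiset.cons_le_cons_iff a).1 h⟩

theorem exists_of_forall₂_append_cons {α β : Type*} {R : α → β → Prop} {l₁ l₂ : List α} {a : α}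
    {l : List β} (h : List.Forall₂ R (l₁ ++ a :: l₂) l) :
    ∃ l₁' b l₂', l = l₁' ++ b :: l₂' ∧ List.Forall₂ R l₁ l₁' ∧ R a b ∧ List.Forall₂ R l₂ l₂' := by
  induction l₁ generalizing l with
  | nil =>
    obtain ⟨b, l₂', hab, hl₂, rfl⟩ := List.forall₂_cons_left_iff.1 h
    exact ⟨[], b, l₂', rfl, .nil, hab, hl₂⟩
  | cons x l₁ ih =>
    obtain ⟨y, l', hxy, hl', rfl⟩ := List.forall₂_cons_left_iff.1 h
    obtain ⟨l₁', b, l₂', rfl, hl₁, hab, hl₂⟩ := ih hl'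
    exact ⟨y :: l₁', b, l₂', rfl, .cons hxy hl₁, hab, hl₂⟩

/-- `H` arises from the linear nested sequent `G` by weakening: formulae may be added in all
components at once, including those of the binary nesting, but the nesting structure is kept. -/
def IsWeakening (G H : LNSe) : Prop :=
  List.Forall₂ (· ≤ ·) G.1 H.1 ∧ Option.Rel (· ≤ ·) G.2 H.2

/-- Every weakening of the linear nested sequent `G` is derivable within depth `d` by rule
applications of level at least `k`. As an induction hypothesis this is strong enough to pass from
the premises of a rule to its conclusion. -/
def WeakeningStable (Ax : EAx) (con : Bool) (d k : ℕ) (G : LNSe) : Prop :=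
  ∀ H, IsWeakening G H → EDn Ax con d k H

namespace IsWeakening

variable {pre pre' post post' : List Cmp} {ep ep' : Option (Cmp × Cmp)} {c c' : Cmp}

theorem append (hpre : List.Forall₂ (· ≤ ·) pre pre') (hpost : List.Forall₂ (· ≤ ·) post post')
    (hep : Option.Rel (· ≤ ·) ep ep') : IsWeakening (pre ++ post, ep) (pre' ++ post', ep') :=
  ⟨List.rel_append hpre hpost, hep⟩

theorem of_component_le (hc : c ≤ c') :
    IsWeakening (pre ++ c :: post, ep) (pre ++ c' :: post, ep) :=
  .append (List.forall₂_refl _) (.cons hc (List.forall₂_refl _)) <| by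
    cases ep with
    | none => exact .none
    | some _ => exact .some le_rfl

theorem exists_component {H : LNSe} (h : IsWeakening (pre ++ c :: post, ep) H) :
    ∃ pre' c' post' ep', H = (pre' ++ c' :: post', ep') ∧ List.Forall₂ (· ≤ ·) pre pre' ∧
      c ≤ c' ∧ List.Forall₂ (· ≤ ·) post post' ∧ Option.Rel (· ≤ ·) ep ep' := by
  obtain ⟨L, ep'⟩ := H
  obtain ⟨hL, hep⟩ := h
  obtain ⟨pre', c', post', rfl, hpre, hc, hpost⟩ := exists_of_forall₂_append_cons hL
  exact ⟨pre', c', post', ep', rfl, hpre, hc, hpost, hep⟩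

end IsWeakening

namespace WeakeningStable

variable {Ax : EAx} {con : Bool} {d k : ℕ}

section Component

variable {pre post : List Cmp} {ep : Option (Cmp × Cmp)} {Γ Δ : Multiset Fm} {F : Fm}

theorem of_principal_left (hk : k ≤ pre.length + 1)
    (h : ∀ {pre' Γ' Δ' post' ep'}, k ≤ pre'.length + 1 → Γ ≤ Γ' → Δ ≤ Δ' →
      (∀ {Γ₁ Δ₁ Γ₁' Δ₁'}, Γ₁ ≤ Γ₁' → Δ₁ ≤ Δ₁' →
        IsWeakening (pre ++ (Γ₁, Δ₁) :: post, ep) (pre' ++ (Γ₁', Δ₁') :: post', ep')) →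
      EDn Ax con d k (pre' ++ (F ::ₘ Γ', Δ') :: post', ep')) :
    WeakeningStable Ax con d k (pre ++ (F ::ₘ Γ, Δ) :: post, ep) := by
  intro H hH
  obtain ⟨pre', ⟨_, Δ'⟩, post', ep', rfl, hpre, ⟨hFΓ, hΔ⟩, hpost, hep⟩ := hH.exists_component
  obtain ⟨Γ', rfl, hΓ⟩ := exists_cons_of_cons_le hFΓ
  exact h (hpre.length_eq ▸ hk) hΓ hΔ fun h₁ h₂ => .append hpre (.cons ⟨h₁, h₂⟩ hpost) hep

theorem of_principal_right (hk : k ≤ pre.length + 1)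
    (h : ∀ {pre' Γ' Δ' post' ep'}, k ≤ pre'.length + 1 → Γ ≤ Γ' → Δ ≤ Δ' →
      (∀ {Γ₁ Δ₁ Γ₁' Δ₁'}, Γ₁ ≤ Γ₁' → Δ₁ ≤ Δ₁' →
        IsWeakening (pre ++ (Γ₁, Δ₁) :: post, ep) (pre' ++ (Γ₁', Δ₁') :: post', ep')) →
      EDn Ax con d k (pre' ++ (Γ', F ::ₘ Δ') :: post', ep')) :
    WeakeningStable Ax con d k (pre ++ (Γ, F ::ₘ Δ) :: post, ep) := by
  intro H hH
  obtain ⟨pre', ⟨Γ', _⟩, post', ep', rfl, hpre, ⟨hΓ, hFΔ⟩, hpost, hep⟩ := hH.exists_component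
  obtain ⟨Δ', rfl, hΔ⟩ := exists_cons_of_cons_le hFΔ
  exact h (hpre.length_eq ▸ hk) hΓ hΔ fun h₁ h₂ => .append hpre (.cons ⟨h₁, h₂⟩ hpost) hep

end Component

section Modal

variable {G : List Cmp} {Γ Δ Sg Pp Om Th : Multiset Fm} {A B : Fm}

theorem boxRe (hk : k ≤ G.length + 1)
    (h : WeakeningStable Ax con d k (G ++ [(Γ, Δ)], some ((0, {B}), ({B}, 0)))) :
    WeakeningStable Ax con (d + 1) k (G ++ [(Γ, Fm.box B ::ₘ Δ)], none) := by
  intro H hH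
  obtain ⟨G', ⟨Γ', _⟩, _, _, rfl, hG, ⟨hΓ, hBΔ⟩, ⟨⟩, ⟨⟩⟩ := hH.exists_component
  obtain ⟨Δ', rfl, hΔ⟩ := exists_cons_of_cons_le hBΔ
  exact .boxRe (hG.length_eq ▸ hk) (h _ (.append hG (.cons ⟨hΓ, hΔ⟩ .nil) (.some le_rfl)))

theorem ruleN (hN : Ax.n = true) (hk : k ≤ G.length + 1)
    (h : WeakeningStable Ax con d k (G ++ [(Γ, Δ), (0, {B})], none)) :
    WeakeningStable Ax con (d + 1) k (G ++ [(Γ, Fm.box B ::ₘ Δ)], none) := by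
  intro H hH
  obtain ⟨G', ⟨Γ', _⟩, _, _, rfl, hG, ⟨hΓ, hBΔ⟩, ⟨⟩, ⟨⟩⟩ := hH.exists_component
  obtain ⟨Δ', rfl, hΔ⟩ := exists_cons_of_cons_le hBΔ
  exact .ruleN hN (hG.length_eq ▸ hk) (h _ (.append hG (.cons ⟨hΓ, hΔ⟩ (.cons le_rfl .nil)) .none))

theorem boxLe (hk : k ≤ G.length + 1)
    (h₁ : WeakeningStable Ax con d k (G ++ [(Γ, Δ), (A ::ₘ Sg, Pp)], none))
    (h₂ : WeakeningStable Ax con d k (G ++ [(Γ, Δ), (Om, A ::ₘ Th)], none)) :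
    WeakeningStable Ax con (d + 1) k
      (G ++ [(Fm.box A ::ₘ Γ, Δ)], some ((Sg, Pp), (Om, Th))) := by
  intro H hH
  obtain ⟨G', ⟨_, Δ'⟩, _, _, rfl, hG, ⟨hAΓ, hΔ⟩, ⟨⟩, ⟨⟨hSg, hPp⟩, ⟨hOm, hTh⟩⟩⟩ :=
    hH.exists_component
  obtain ⟨Γ', rfl, hΓ⟩ := exists_cons_of_cons_le hAΓ
  exact .boxLe (hG.length_eq ▸ hk)
    (h₁ _ (.append hG (.cons ⟨hΓ, hΔ⟩ (.cons ⟨Multiset.cons_le_cons A hSg, hPp⟩ .nil)) .none))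
    (h₂ _ (.append hG (.cons ⟨hΓ, hΔ⟩ (.cons ⟨hOm, Multiset.cons_le_cons A hTh⟩ .nil)) .none))

theorem ruleM {c : Cmp} (hM : Ax.m = true) (hk : k ≤ G.length + 2)
    (h : WeakeningStable Ax con d k (c :: G, some ((Sg, Pp), (Fm.bot ::ₘ Om, Th)))) :
    WeakeningStable Ax con (d + 1) k (c :: G, some ((Sg, Pp), (Om, Th))) := by
  rintro ⟨_, _⟩ ⟨_ | ⟨hc, hG⟩, ⟨⟨hSg, hPp⟩, ⟨hOm, hTh⟩⟩⟩
  exact .ruleM hM (hG.length_eq ▸ hk)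
    (h _ ⟨.cons hc hG, .some ⟨⟨hSg, hPp⟩, ⟨Multiset.cons_le_cons Fm.bot hOm, hTh⟩⟩⟩)

theorem ruleC (hC : Ax.c = true) (hk : k ≤ G.length + 1)
    (h₁ : WeakeningStable Ax con d k (G ++ [(Γ, Δ)], some ((A ::ₘ Sg, Pp), (Om, Th))))
    (h₂ : WeakeningStable Ax con d k (G ++ [(Γ, Δ), (Om, A ::ₘ Th)], none)) :
    WeakeningStable Ax con (d + 1) k
      (G ++ [(Fm.box A ::ₘ Γ, Δ)], some ((Sg, Pp), (Om, Th))) := by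
  intro H hH
  obtain ⟨G', ⟨_, Δ'⟩, _, _, rfl, hG, ⟨hAΓ, hΔ⟩, ⟨⟩, ⟨⟨hSg, hPp⟩, ⟨hOm, hTh⟩⟩⟩ :=
    hH.exists_component
  obtain ⟨Γ', rfl, hΓ⟩ := exists_cons_of_cons_le hAΓ
  exact .ruleC hC (hG.length_eq ▸ hk)
    (h₁ _ (.append hG (.cons ⟨hΓ, hΔ⟩ .nil)
      (.some ⟨⟨Multiset.cons_le_cons A hSg, hPp⟩, ⟨hOm, hTh⟩⟩)))
    (h₂ _ (.append hG (.cons ⟨hΓ, hΔ⟩ (.cons ⟨hOm, Multiset.cons_le_cons A hTh⟩ .nil)) .none))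

end Modal

end WeakeningStable

open WeakeningStable Multiset in
theorem EDn.weakeningStable {Ax : EAx} {con : Bool} {d k : ℕ} {G : LNSe} :
    EDn Ax con d k G → WeakeningStable Ax con d k G
  | mono h hd hk => fun H hH => .mono (h.weakeningStable H hH) hd hk
  | init hk => of_principal_left hk fun hk _ hΔ _ =>
      have ⟨_, hΔ', _⟩ := exists_cons_of_cons_le hΔ
      hΔ' ▸ .init hk
  | botL hk => of_principal_left hk fun hk _ _ _ => .botL hk
  | topR hk => of_principal_right hk fun hk _ _ _ => .topR hk
  | negL hk h => of_principal_left hk fun hk hΓ hΔ hS =>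
      .negL hk (h.weakeningStable _ (hS hΓ (cons_le_cons _ hΔ)))
  | negR hk h => of_principal_right hk fun hk hΓ hΔ hS =>
      .negR hk (h.weakeningStable _ (hS (cons_le_cons _ hΓ) hΔ))
  | andL hk h => of_principal_left hk fun hk hΓ hΔ hS =>
      .andL hk (h.weakeningStable _ (hS (cons_le_cons _ (cons_le_cons _ hΓ)) hΔ))
  | andR hk hA hB => of_principal_right hk fun hk hΓ hΔ hS =>
      .andR hk (hA.weakeningStable _ (hS hΓ (cons_le_cons _ hΔ)))
        (hB.weakeningStable _ (hS hΓ (cons_le_cons _ hΔ)))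
  | orL hk hA hB => of_principal_left hk fun hk hΓ hΔ hS =>
      .orL hk (hA.weakeningStable _ (hS (cons_le_cons _ hΓ) hΔ))
        (hB.weakeningStable _ (hS (cons_le_cons _ hΓ) hΔ))
  | orR hk h => of_principal_right hk fun hk hΓ hΔ hS =>
      .orR hk (h.weakeningStable _ (hS hΓ (cons_le_cons _ (cons_le_cons _ hΔ))))
  | impL hk hB hA => of_principal_left hk fun hk hΓ hΔ hS =>
      .impL hk (hB.weakeningStable _ (hS (cons_le_cons _ hΓ) hΔ))
        (hA.weakeningStable _ (hS hΓ (cons_le_cons _ hΔ)))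
  | impR hk h => of_principal_right hk fun hk hΓ hΔ hS =>
      .impR hk (h.weakeningStable _ (hS (cons_le_cons _ hΓ) (cons_le_cons _ hΔ)))
  | conL hcon hk h => of_principal_left hk fun hk hΓ hΔ hS =>
      .conL hcon hk (h.weakeningStable _ (hS (cons_le_cons _ (cons_le_cons _ hΓ)) hΔ))
  | conR hcon hk h => of_principal_right hk fun hk hΓ hΔ hS =>
      .conR hcon hk (h.weakeningStable _ (hS hΓ (cons_le_cons _ (cons_le_cons _ hΔ))))
  | boxRe hk h => h.weakeningStable.boxRe hk
  | boxLe hk h₁ h₂ => h₁.weakeningStable.boxLe hk h₂.weakeningStable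
  | ruleN hN hk h => h.weakeningStable.ruleN hN hk
  | ruleM hM hk h => h.weakeningStable.ruleM hM hk
  | ruleC hC hk h₁ h₂ => h₁.weakeningStable.ruleC hC hk h₂.weakeningStable

/-- Depth-preserving admissibility of weakening in `LNS_E𝒜` and `LNS_E𝒜Con`
(for every `𝒜 ⊆ {M, C, N}`): if there is a derivation of `S{Γ ⇒ Δ}` of depth
at most `d` in which the level of the active components of every rule
application is at least `k`, then there are such derivations of
`S{Γ, A ⇒ Δ}` and of `S{Γ ⇒ A, Δ}` in the same system. -/
theorem weakening_admissible (Ax : EAx) (con : Bool) (d k : ℕ)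
    (pre post : List Cmp) (ep : Option (Cmp × Cmp)) (Γ Δ : Multiset Fm) (A : Fm)
    (h : EDn Ax con d k (pre ++ (Γ, Δ) :: post, ep)) :
    EDn Ax con d k (pre ++ (A ::ₘ Γ, Δ) :: post, ep) ∧
    EDn Ax con d k (pre ++ (Γ, A ::ₘ Δ) :: post, ep) := by
  have hL : (Γ, Δ) ≤ (A ::ₘ Γ, Δ) := ⟨Multiset.le_cons_self Γ A, le_rfl⟩
  have hR : (Γ, Δ) ≤ (Γ, A ::ₘ Δ) := ⟨le_rfl, Multiset.le_cons_self Δ A⟩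
  exact ⟨h.weakeningStable _ (.of_component_le hL), h.weakeningStable _ (.of_component_le hR)⟩
end

section
/- Let 𝒜 ⊆ {M, C, N} and write ⊢ for derivability in LNS_E𝒜Con. The non-end-active versions of the propositional rules are m-invertible: for every n ≥ 1, (1) if ⊢ S{Γ, (¬A)ⁿ ⇒ Δ} then ⊢ S{Γ ⇒ A^{n+k}, Δ} for some k ≥ 0; (2) if ⊢ S{Γ ⇒ (¬A)ⁿ, Δ} then ⊢ S{Γ, A^{n+k} ⇒ Δ} for some k ≥ 0; (3) if ⊢ S{Γ, (A→B)ⁿ ⇒ Δ} then ⊢ S{Γ, B^{n+k} ⇒ Δ} and ⊢ S{Γ ⇒ A^{n+ℓ}, Δ} for some k, ℓ ≥ 0; (4) if ⊢ S{Γ ⇒ (A→B)ⁿ, Δ} then ⊢ S{Γ, A^{n+k} ⇒ B^{n+ℓ}, Δ} for some k, ℓ ≥ 0; (5) if ⊢ S{Γ, (A∨B)ⁿ ⇒ Δ} then ⊢ S{Γ, A^{n+k} ⇒ Δ} and ⊢ S{Γ, B^{n+ℓ} ⇒ Δ} for some k, ℓ ≥ 0; (6) if ⊢ S{Γ ⇒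 (A∨B)ⁿ, Δ} then ⊢ S{Γ ⇒ A^{n+k}, B^{n+ℓ}, Δ} for some k, ℓ ≥ 0; (7) if ⊢ S{Γ, (A∧B)ⁿ ⇒ Δ} then ⊢ S{Γ, A^{n+k}, B^{n+ℓ} ⇒ Δ} for some k, ℓ ≥ 0; (8) if ⊢ S{Γ ⇒ (A∧B)ⁿ, Δ} then ⊢ S{Γ ⇒ A^{n+k}, Δ} and ⊢ S{Γ ⇒ B^{n+ℓ}, Δ} for some k, ℓ ≥ 0. Moreover, in each case both the depth of the derivation and the minimal level of the active components of rule applications are preserved. -/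
/-- `n` copies of the formula `A`. -/
def rep (n : ℕ) (A : Fm) : Multiset Fm := Multiset.replicate n A

/-!
Every rule of the calculus is schematic in its context, so copies of a compound formula `f` that lie
in the context of a rule application may be replaced, in the premises and in the conclusion, by
anything else. A propositional rule application that does touch `f` is either the rule for `f`, and
then each of its premises already contains the corresponding subformulas, or a contraction, and then
its premise has one more copy of `f`. Induction on the depth therefore replaces `n` copies of `f` by
`m` copies of these subformulas, with the same depth and level, for all large `m`.
-/

open Filter

/-- A linear nested sequent with a hole `S{·}` in place of one of its components. -/
structure SeqContext where
  pre : List Cmp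
  post : List Cmp
  ep : Option (Cmp × Cmp)

namespace SeqContext

/-- `S{c}`: the linear nested sequent obtained by filling the hole of `S` with the component `c`. -/
def fill (S : SeqContext) (c : Cmp) : LNSe := (S.pre ++ c :: S.post, S.ep)

/-- The level of the hole. -/
def level (S : SeqContext) : ℕ := S.pre.length + 1

end SeqContext

/-- The logical propositional rules and axioms, without context: `LogicalRule p qs` says that a
component `p + c` may be inferred from the components `q + c` for `q ∈ qs`, for every `c`. -/
inductive LogicalRule : Cmp → List Cmp → Prop
  | init (m) : LogicalRule ({Fm.var m}, {Fm.var m}) []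
  | botL : LogicalRule ({Fm.bot}, 0) []
  | topR : LogicalRule (0, {Fm.top}) []
  | negL (A) : LogicalRule ({Fm.neg A}, 0) [(0, {A})]
  | negR (A) : LogicalRule (0, {Fm.neg A}) [({A}, 0)]
  | andL (A B) : LogicalRule ({Fm.and A B}, 0) [({A} + {B}, 0)]
  | andR (A B) : LogicalRule (0, {Fm.and A B}) [(0, {A}), (0, {B})]
  | orL (A B) : LogicalRule ({Fm.or A B}, 0) [({A}, 0), ({B}, 0)]
  | orR (A B) : LogicalRule (0, {Fm.or A B}) [(0, {A} + {B})]
  | impL (A B) : LogicalRule ({Fm.imp A B}, 0) [({B}, 0), (0, {A})]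
  | impR (A B) : LogicalRule (0, {Fm.imp A B}) [({A}, {B})]

/-- The rules acting inside a single component: the logical ones and, if `con = true`,
contraction. -/
inductive LocalRule (con : Bool) : Cmp → List Cmp → Prop
  | logical {p qs} : LogicalRule p qs → LocalRule con p qs
  | conL (A) : con = true → LocalRule con ({A}, 0) [({A} + {A}, 0)]
  | conR (A) : con = true → LocalRule con (0, {A}) [(0, {A} + {A})]

/-- The modal rules, which act at the end of a linear nested sequent: `ModalRule Ax p ep o ts`
infers `G ⫽ p + c`, terminated by `ep`, from the sequents `G ⫽ c` extended by the components and
the binary nesting of some `t ∈ ts`. The minimal level of an active component is `G.length + o`,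
where `o = 2` for `M`, which acts on the nesting only. -/
inductive ModalRule (Ax : EAx) :
    Cmp → Option (Cmp × Cmp) → ℕ → List (List Cmp × Option (Cmp × Cmp)) → Prop
  | boxRe (B) : ModalRule Ax (0, {Fm.box B}) none 1 [([], some ((0, {B}), ({B}, 0)))]
  | boxLe (A Sg Pp Om Th) : ModalRule Ax ({Fm.box A}, 0) (some ((Sg, Pp), (Om, Th))) 1
      [([(A ::ₘ Sg, Pp)], none), ([(Om, A ::ₘ Th)], none)]
  | ruleN (B) : Ax.n = true → ModalRule Ax (0, {Fm.box B}) none 1 [([(0, {B})], none)]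
  | ruleM (Sg Pp Om Th) : Ax.m = true → ModalRule Ax 0 (some ((Sg, Pp), (Om, Th))) 2
      [([], some ((Sg, Pp), (Fm.bot ::ₘ Om, Th)))]
  | ruleC (A Sg Pp Om Th) : Ax.c = true →
      ModalRule Ax ({Fm.box A}, 0) (some ((Sg, Pp), (Om, Th))) 1
        [([], some ((A ::ₘ Sg, Pp), (Om, Th))), ([(Om, A ::ₘ Th)], none)]

/-- `Inference Ax con k Gs G`: a single rule application with premises `Gs` and conclusion `G`
whose active components have level at least `k`. -/
inductive Inference (Ax : EAx) (con : Bool) (k : ℕ) : List LNSe → LNSe → Prop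
  | ofLocal {p qs} (S : SeqContext) (c : Cmp) : LocalRule con p qs → k ≤ S.level →
      Inference Ax con k (qs.map fun q => S.fill (q + c)) (S.fill (p + c))
  | ofModal {p ep o ts} (pre : List Cmp) (c : Cmp) : ModalRule Ax p ep o ts →
      k ≤ pre.length + o →
      Inference Ax con k (ts.map fun t => SeqContext.fill ⟨pre, t.1, t.2⟩ c)
        (SeqContext.fill ⟨pre, [], ep⟩ (p + c))

theorem Inference.mono {Ax : EAx} {con : Bool} {k k' : ℕ} {Gs : List LNSe} {G : LNSe}
    (h : Inference Ax con k Gs G) (hk : k' ≤ k) : Inference Ax con k' Gs G := by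
  cases h with
  | ofLocal S c hr hS => exact .ofLocal S c hr (hk.trans hS)
  | ofModal pre c hr hpre => exact .ofModal pre c hr (hk.trans hpre)

namespace EDn

variable {Ax : EAx} {con : Bool} {d k : ℕ} {Gs : List LNSe} {G : LNSe}

theorem of_local {p c : Cmp} {qs : List Cmp} {S : SeqContext} (hr : LocalRule con p qs)
    (hk : k ≤ S.level) (h : ∀ q ∈ qs, EDn Ax con d k (S.fill (q + c))) :
    EDn Ax con (d + 1) k (S.fill (p + c)) := by
  obtain ⟨Γ, Δ⟩ := c
  simp only [SeqContext.fill, SeqContext.level] at hk h ⊢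
  rcases hr with (_ | _) | ⟨A, hc⟩ | ⟨A, hc⟩ <;>
    simp only [Prod.mk_add_mk, Multiset.singleton_add, Multiset.cons_add, zero_add,
      List.forall_mem_cons] at h ⊢
  · exact .init hk
  · exact .botL hk
  · exact .topR hk
  · exact .negL hk h.1
  · exact .negR hk h.1
  · exact .andL hk h.1
  · exact .andR hk h.1 h.2.1
  · exact .orL hk h.1 h.2.1
  · exact .orR hk h.1
  · exact .impL hk h.1 h.2.1
  · exact .impR hk h.1
  · exact .conL hc hk h.1
  · exact .conR hc hk h.1

theorem of_modal {p c : Cmp} {ep : Option (Cmp × Cmp)} {o : ℕ}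
    {ts : List (List Cmp × Option (Cmp × Cmp))} {pre : List Cmp} (hr : ModalRule Ax p ep o ts)
    (hk : k ≤ pre.length + o)
    (h : ∀ t ∈ ts, EDn Ax con d k (SeqContext.fill ⟨pre, t.1, t.2⟩ c)) :
    EDn Ax con (d + 1) k (SeqContext.fill ⟨pre, [], ep⟩ (p + c)) := by
  obtain ⟨Γ, Δ⟩ := c
  simp only [SeqContext.fill] at h ⊢
  rcases hr with B | ⟨A, Sg, Pp, Om, Th⟩ | ⟨B, hN⟩ | ⟨Sg, Pp, Om, Th, hM⟩ |
      ⟨A, Sg, Pp, Om, Th, hC⟩ <;>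
    simp only [Prod.mk_add_mk, Multiset.singleton_add, zero_add, List.forall_mem_cons] at h ⊢
  · exact .boxRe hk h.1
  · exact .boxLe hk h.1 h.2.1
  · exact .ruleN hN hk h.1
  · cases pre with
    | nil => exact .ruleM hM hk h.1
    | cons x pre => exact .ruleM hM (hk.trans (by simp)) h.1
  · exact .ruleC hC hk h.1 h.2.1

theorem of_inference (hI : Inference Ax con k Gs G) (h : ∀ G' ∈ Gs, EDn Ax con d k G') :
    EDn Ax con (d + 1) k G := by
  cases hI with
  | ofLocal S c hr hk => exact of_local hr hk (List.forall_mem_map.1 h)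
  | ofModal pre c hr hk => exact of_modal hr hk (List.forall_mem_map.1 h)

theorem exists_inference_of_local {p x : Cmp} {qs pre post : List Cmp}
    {ep : Option (Cmp × Cmp)} (Γ Δ : Multiset Fm) (hr : LocalRule con p qs)
    (hk : k ≤ pre.length + 1) (hx : x = p + (Γ, Δ))
    (h : ∀ q ∈ qs, EDn Ax con d k (pre ++ (q + (Γ, Δ)) :: post, ep)) :
    ∃ d' < d + 1, ∃ Gs, Inference Ax con k Gs (pre ++ x :: post, ep) ∧
      ∀ G' ∈ Gs, EDn Ax con d' k G' :=
  ⟨d, d.lt_succ_self, _, hx ▸ .ofLocal ⟨pre, post, ep⟩ (Γ, Δ) hr hk, List.forall_mem_map.2 h⟩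

theorem exists_inference_of_modal {p x : Cmp} {ep : Option (Cmp × Cmp)} {o : ℕ}
    {ts : List (List Cmp × Option (Cmp × Cmp))} {pre : List Cmp} (Γ Δ : Multiset Fm)
    (hr : ModalRule Ax p ep o ts) (hk : k ≤ pre.length + o) (hx : x = p + (Γ, Δ))
    (h : ∀ t ∈ ts, EDn Ax con d k (pre ++ (Γ, Δ) :: t.1, t.2)) :
    ∃ d' < d + 1, ∃ Gs, Inference Ax con k Gs (pre ++ [x], ep) ∧
      ∀ G' ∈ Gs, EDn Ax con d' k G' :=
  ⟨d, d.lt_succ_self, _, hx ▸ .ofModal pre (Γ, Δ) hr hk, List.forall_mem_map.2 h⟩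

theorem exists_inference_of_ruleM {G : List Cmp} {x : Cmp} {Sg Pp Om Th : Multiset Fm}
    (hM : Ax.m = true) (hk : k ≤ G.length + 2)
    (h : EDn Ax con d k (x :: G, some ((Sg, Pp), (Fm.bot ::ₘ Om, Th)))) :
    ∃ d' < d + 1, ∃ Gs, Inference Ax con k Gs (x :: G, some ((Sg, Pp), (Om, Th))) ∧
      ∀ G' ∈ Gs, EDn Ax con d' k G' := by
  obtain h₀ | ⟨pre, ⟨Γ, Δ⟩, hG⟩ := List.eq_nil_or_concat (x :: G)
  · exact absurd h₀ (List.cons_ne_nil x G)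
  have hlen : G.length = pre.length := by simpa using congrArg List.length hG
  rw [hG, List.concat_eq_append] at h ⊢
  exact exists_inference_of_modal Γ Δ (.ruleM _ _ _ _ hM) (hlen ▸ hk) (zero_add _).symm
    (by simpa using h)

theorem exists_inference (h : EDn Ax con d k G) :
    ∃ d' < d, ∃ Gs, Inference Ax con k Gs G ∧ ∀ G' ∈ Gs, EDn Ax con d' k G' := by
  induction h with
  | mono _ hd hk ih =>
    obtain ⟨d', hd', Gs, hI, h⟩ := ih
    exact ⟨d', hd'.trans_le hd, Gs, hI.mono hk, fun G' hG' => (h G' hG').mono le_rfl hk⟩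
  | @init _ _ _ Γ Δ m _ _ hk =>
    exact exists_inference_of_local Γ Δ (.logical (.init m)) hk (by simp) (by simp)
  | @botL _ _ _ Γ Δ _ _ hk =>
    exact exists_inference_of_local Γ Δ (.logical .botL) hk (by simp) (by simp)
  | @topR _ _ _ Γ Δ _ _ hk =>
    exact exists_inference_of_local Γ Δ (.logical .topR) hk (by simp) (by simp)
  | @negL _ _ _ Γ Δ A _ _ hk h =>
    exact exists_inference_of_local Γ Δ (.logical (.negL A)) hk (by simp) (by simpa using h)
  | @negR _ _ _ Γ Δ A _ _ hk h =>
    exact exists_inference_of_local Γ Δ (.logical (.negR A)) hk (by simp) (by simpa using h)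
  | @andL _ _ _ Γ Δ A B _ _ hk h =>
    exact exists_inference_of_local Γ Δ (.logical (.andL A B)) hk (by simp) (by simpa using h)
  | @andR _ _ _ Γ Δ A B _ _ hk h h' =>
    exact exists_inference_of_local Γ Δ (.logical (.andR A B)) hk (by simp) (by simpa using ⟨h, h'⟩)
  | @orL _ _ _ Γ Δ A B _ _ hk h h' =>
    exact exists_inference_of_local Γ Δ (.logical (.orL A B)) hk (by simp) (by simpa using ⟨h, h'⟩)
  | @orR _ _ _ Γ Δ A B _ _ hk h =>
    exact exists_inference_of_local Γ Δ (.logical (.orR A B)) hk (by simp) (by simpa using h)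
  | @impL _ _ _ Γ Δ A B _ _ hk h h' =>
    exact exists_inference_of_local Γ Δ (.logical (.impL A B)) hk (by simp) (by simpa using ⟨h, h'⟩)
  | @impR _ _ _ Γ Δ A B _ _ hk h =>
    exact exists_inference_of_local Γ Δ (.logical (.impR A B)) hk (by simp) (by simpa using h)
  | @conL _ _ _ Γ Δ A _ _ hc hk h =>
    exact exists_inference_of_local Γ Δ (.conL A hc) hk (by simp) (by simpa using h)
  | @conR _ _ _ Γ Δ A _ _ hc hk h =>
    exact exists_inference_of_local Γ Δ (.conR A hc) hk (by simp) (by simpa using h)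
  | @boxRe _ Γ Δ B _ _ hk h =>
    exact exists_inference_of_modal Γ Δ (.boxRe B) hk (by simp) (by simpa using h)
  | @boxLe _ Γ Δ _ _ _ _ A _ _ hk h h' =>
    exact exists_inference_of_modal Γ Δ (.boxLe A ..) hk (by simp) (by simpa using ⟨h, h'⟩)
  | @ruleN _ Γ Δ B _ _ hN hk h =>
    exact exists_inference_of_modal Γ Δ (.ruleN B hN) hk (by simp) (by simpa using h)
  | ruleM hM hk h => exact exists_inference_of_ruleM hM hk h
  | @ruleC _ Γ Δ _ _ _ _ A _ _ hC hk h h' =>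
    exact exists_inference_of_modal Γ Δ (.ruleC A _ _ _ _ hC) hk (by simp)
      (by simpa using ⟨h, h'⟩)

end EDn

theorem append_cons_eq_append_cons {α : Type*} {a b a' b' : List α} {x y : α}
    (h : a ++ x :: b = a' ++ y :: b') :
    (a = a' ∧ x = y ∧ b = b') ∨ (∃ l, a' = a ++ x :: l ∧ b = l ++ y :: b') ∨
      ∃ l, a = a' ++ y :: l ∧ b' = l ++ x :: b := by
  obtain ⟨_ | ⟨z, l⟩, rfl, h⟩ | ⟨_ | ⟨z, l⟩, rfl, h⟩ := List.append_eq_append_iff.1 h <;>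
    simp_all

theorem le_of_disjoint_of_le_add {α : Type*} {s t u : Multiset α} (hsu : Disjoint s u)
    (h : u ≤ s + t) : u ≤ t := by
  classical
  refine le_of_add_le_add_left (a := s) ?_
  rw [Multiset.add_eq_union_iff_disjoint.2 hsu]
  exact sup_le (Multiset.le_add_right s t) h

theorem exists_eq_add_of_disjoint {α β : Type*} {p c c' u : Multiset α × Multiset β}
    (hpu : Disjoint p u) (h : p + c = c' + u) : ∃ e, c = e + u ∧ c' = p + e := by
  have hle : u ≤ p + c := h ▸ le_add_self
  rw [Prod.disjoint_iff] at hpu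
  have huc : u ≤ c :=
    ⟨le_of_disjoint_of_le_add hpu.1 hle.1, le_of_disjoint_of_le_add hpu.2 hle.2⟩
  obtain ⟨e, rfl⟩ := exists_add_of_le huc
  refine ⟨e, add_comm u e, add_right_cancel (b := u) ?_⟩
  rw [← h, add_comm u e, add_assoc]

theorem disjoint_nsmul_right {α β : Type*} {p f : Multiset α × Multiset β} (h : Disjoint p f)
    (n : ℕ) : Disjoint p (n • f) := by
  simp only [Prod.disjoint_iff, Multiset.disjoint_left] at h ⊢
  exact ⟨fun hp hf => h.1 hp (Multiset.mem_of_mem_nsmul hf),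
    fun hp hf => h.2 hp (Multiset.mem_of_mem_nsmul hf)⟩

theorem LogicalRule.disjoint_modal {f q p : Cmp} {qs : List Cmp} {Ax : EAx}
    {ep : Option (Cmp × Cmp)} {o : ℕ} {ts : List (List Cmp × Option (Cmp × Cmp))}
    (hf : LogicalRule f qs) (hq : q ∈ qs) (hr : ModalRule Ax p ep o ts) : Disjoint p f := by
  cases hf <;> cases hr <;> simp_all [Prod.disjoint_iff]

theorem LogicalRule.principal_eq {con : Bool} {f q p : Cmp} {qs qs' : List Cmp}
    (hf : LogicalRule f qs) (hq : q ∈ qs) (hr : LocalRule con p qs') (hpf : ¬ Disjoint p f) :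
    p = f ∧ (qs' = qs ∨ qs' = [f + f]) := by
  rcases hr with hr | _ | _
  · cases hf <;> cases hr <;> simp_all [Prod.disjoint_iff]
  · cases hf <;> simp_all [Prod.disjoint_iff]
  · cases hf <;> simp_all [Prod.disjoint_iff]

/-- In the inference from `Gs` to `S{c + u}` the part `u` of the conclusion belongs to the context,
so that any `w` may take its place. The list `L` consists of the premises with the context of `u`
written as a hole. -/
def PassiveIn (Ax : EAx) (con : Bool) (k : ℕ) (S : SeqContext) (c u : Cmp) (Gs : List LNSe) :
    Prop :=
  ∃ L : List (SeqContext × Cmp), Gs = L.map (fun x => x.1.fill (x.2 + u)) ∧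
    ∀ w, Inference Ax con k (L.map fun x => x.1.fill (x.2 + w)) (S.fill (c + w))

section

variable {Ax : EAx} {con : Bool} {k : ℕ} {S : SeqContext} {p c u : Cmp} {Gs : List LNSe}

theorem LocalRule.passiveIn_or_principal {T : SeqContext} {a : Cmp} {qs : List Cmp}
    (hr : LocalRule con p qs) (hk : k ≤ T.level) (h : T.fill (p + a) = S.fill (c + u)) :
    PassiveIn Ax con k S c u (qs.map fun q => T.fill (q + a)) ∨
      (¬ Disjoint p u ∧ T = S ∧ p + a = c + u) := by
  obtain ⟨pre, post, ep⟩ := S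
  obtain ⟨pre', post', ep'⟩ := T
  obtain ⟨hl : pre' ++ (p + a) :: post' = pre ++ (c + u) :: post, rfl : ep' = ep⟩ :=
    Prod.mk.inj h
  obtain ⟨rfl, hc, rfl⟩ | ⟨l, rfl, rfl⟩ | ⟨l, rfl, rfl⟩ := append_cons_eq_append_cons hl
  · by_cases hpu : Disjoint p u
    · obtain ⟨e, rfl, rfl⟩ := exists_eq_add_of_disjoint hpu hc
      refine .inl ⟨qs.map fun q => (⟨pre', post', ep'⟩, q + e), ?_, fun w => ?_⟩
      · simp [add_assoc]
      · simpa [Function.comp_def, add_assoc] using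
          Inference.ofLocal (Ax := Ax) ⟨pre', post', ep'⟩ (e + w) hr hk
    · exact .inr ⟨hpu, rfl, hc⟩
  · refine .inl ⟨qs.map fun q => (⟨pre' ++ (q + a) :: l, post, ep'⟩, c), ?_, fun w => ?_⟩
    · simp [SeqContext.fill]
    · simpa [Function.comp_def, SeqContext.fill] using
        Inference.ofLocal (Ax := Ax) ⟨pre', l ++ (c + w) :: post, ep'⟩ a hr hk
  · refine .inl ⟨qs.map fun q => (⟨pre, l ++ (q + a) :: post', ep'⟩, c), ?_, fun w => ?_⟩
    · simp [SeqContext.fill]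
    · simpa [Function.comp_def, SeqContext.fill] using
        Inference.ofLocal (Ax := Ax) ⟨pre ++ (c + w) :: l, post', ep'⟩ a hr
          (by simpa [SeqContext.level] using hk)

theorem ModalRule.passiveIn {pre : List Cmp} {a : Cmp} {ep : Option (Cmp × Cmp)} {o : ℕ}
    {ts : List (List Cmp × Option (Cmp × Cmp))} (hr : ModalRule Ax p ep o ts)
    (hpu : Disjoint p u) (hk : k ≤ pre.length + o)
    (h : SeqContext.fill ⟨pre, [], ep⟩ (p + a) = S.fill (c + u)) :
    PassiveIn Ax con k S c u (ts.map fun t => SeqContext.fill ⟨pre, t.1, t.2⟩ a) := by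
  obtain ⟨pre', post', ep'⟩ := S
  obtain ⟨hl : pre ++ [p + a] = pre' ++ (c + u) :: post', rfl : ep = ep'⟩ := Prod.mk.inj h
  obtain ⟨rfl, hc, rfl⟩ | ⟨l, rfl, hnil⟩ | ⟨l, rfl, rfl⟩ := append_cons_eq_append_cons hl
  · obtain ⟨e, rfl, rfl⟩ := exists_eq_add_of_disjoint hpu hc
    refine ⟨ts.map fun t => (⟨pre, t.1, t.2⟩, e), ?_, fun w => ?_⟩
    · simp
    · simpa [Function.comp_def, add_assoc] using Inference.ofModal (con := con) pre (e + w) hr hk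
  · simp at hnil
  · refine ⟨ts.map fun t => (⟨pre', l ++ a :: t.1, t.2⟩, c), ?_, fun w => ?_⟩
    · simp [SeqContext.fill]
    · simpa [Function.comp_def, SeqContext.fill] using
        Inference.ofModal (con := con) (pre' ++ (c + w) :: l) a hr (by simpa using hk)

theorem Inference.passiveIn_or_principal
    (hM : ∀ {p ep o ts}, ModalRule Ax p ep o ts → Disjoint p u)
    (hI : Inference Ax con k Gs (S.fill (c + u))) :
    PassiveIn Ax con k S c u Gs ∨
      ∃ p qs a, LocalRule con p qs ∧ ¬ Disjoint p u ∧ p + a = c + u ∧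
        Gs = qs.map fun q => S.fill (q + a) := by
  generalize hG : S.fill (c + u) = G at hI
  cases hI with
  | @ofLocal p qs T a hr hk =>
    obtain h | ⟨hpu, rfl, hc⟩ := hr.passiveIn_or_principal hk hG.symm
    · exact .inl h
    · exact .inr ⟨p, qs, a, hr, hpu, hc, rfl⟩
  | ofModal pre a hr hk => exact .inl (hr.passiveIn (hM hr) hk hG.symm)

theorem LogicalRule.passiveIn_or_mem {f q : Cmp} {qs : List Cmp} {n : ℕ} (hf : LogicalRule f qs)
    (hq : q ∈ qs) (hI : Inference Ax con k Gs (S.fill (c + n • f))) :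
    PassiveIn Ax con k S c (n • f) Gs ∨ ∃ n', n = n' + 1 ∧
      (S.fill (c + q + n' • f) ∈ Gs ∨ S.fill (c + (n + 1) • f) ∈ Gs) := by
  obtain h | ⟨p, qs', a, hr, hp, ha, rfl⟩ :=
    hI.passiveIn_or_principal fun hr => disjoint_nsmul_right (hf.disjoint_modal hq hr) n
  · exact .inl h
  obtain ⟨rfl, hqs⟩ := hf.principal_eq hq hr fun hpf => hp (disjoint_nsmul_right hpf n)
  obtain _ | n := n
  · exact (hp (by rw [zero_smul]; exact disjoint_bot_right)).elim
  obtain rfl : a = c + n • p := add_left_cancel (a := p) (by rw [ha, succ_nsmul]; abel)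
  refine .inr ⟨n, rfl, hqs.imp ?_ ?_⟩
  · rintro rfl
    exact List.mem_map.2 ⟨q, hq, congrArg S.fill (by abel)⟩
  · rintro rfl
    exact List.mem_map.2 ⟨p + p, by simp, congrArg S.fill (by rw [succ_nsmul, succ_nsmul]; abel)⟩

/-- Asking for all large multiplicities, and not only for one, makes it possible to use the same
multiplicity in all premises of a rule. -/
theorem LogicalRule.eventually_derivable {f q : Cmp} {qs : List Cmp} (hf : LogicalRule f qs)
    (hq : q ∈ qs) {d n : ℕ} (h : EDn Ax con d k (S.fill (c + n • f))) :
    ∀ᶠ m : ℕ in atTop, EDn Ax con d k (S.fill (c + m • q)) := by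
  induction d using Nat.strong_induction_on generalizing S c n with
  | _ d ih =>
  obtain ⟨d', hd, Gs, hI, hGs⟩ := h.exists_inference
  obtain ⟨L, rfl, hL⟩ | ⟨n, rfl, hprem | hprem⟩ := hf.passiveIn_or_mem hq hI
  · have hprems : ∀ x ∈ L, ∀ᶠ m : ℕ in atTop, EDn Ax con d' k (x.1.fill (x.2 + m • q)) :=
      fun x hx => ih d' hd (hGs _ (List.mem_map_of_mem hx))
    filter_upwards [(eventually_all_finite L.finite_toSet).2 hprems] with m hm
    exact (EDn.of_inference (hL (m • q)) (List.forall_mem_map.2 hm)).mono hd le_rfl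
  · rw [← map_add_atTop_eq_nat 1, eventually_map]
    filter_upwards [ih d' hd (hGs _ hprem)] with m hm
    rw [succ_nsmul', ← add_assoc]
    exact hm.mono hd.le le_rfl
  · filter_upwards [ih d' hd (hGs _ hprem)] with m hm
    exact hm.mono hd.le le_rfl

end

theorem m_invertibility_general {Ax : EAx} {con : Bool} {P P' Q Q' : Multiset Fm} {qs : List Cmp}
    (hr : LogicalRule (P, P') qs) (hq : (Q, Q') ∈ qs) {d k : ℕ} {pre post : List Cmp}
    {ep : Option (Cmp × Cmp)} {Γ Δ : Multiset Fm} {n : ℕ}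
    (h : EDn Ax con d k (pre ++ (Γ + n • P, n • P' + Δ) :: post, ep)) :
    ∃ j, EDn Ax con d k (pre ++ (Γ + (n + j) • Q, (n + j) • Q' + Δ) :: post, ep) := by
  have hQ := hr.eventually_derivable (S := ⟨pre, post, ep⟩) (c := (Γ, Δ)) (n := n) hq
    (by simpa [SeqContext.fill, add_comm Δ] using h)
  obtain ⟨m, hm, hnm⟩ := (hQ.and (eventually_ge_atTop n)).exists
  obtain ⟨j, rfl⟩ := Nat.exists_eq_add_of_le hnm
  exact ⟨j, by simpa [SeqContext.fill, add_comm Δ] using hm⟩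

/-- Multi-invertibility of the (non-end-active versions of the) propositional
rules in `LNS_E𝒜Con`, preserving both the depth of the derivation and the
minimal level of the active components of rule applications. -/
theorem m_invertibility (Ax : EAx) :
    (∀ (d k : ℕ) (pre post : List Cmp) (ep : Option (Cmp × Cmp))
        (Γ Δ : Multiset Fm) (A : Fm) (n : ℕ), 1 ≤ n →
      EDn Ax true d k (pre ++ (Γ + rep n (Fm.neg A), Δ) :: post, ep) →
      ∃ j, EDn Ax true d k (pre ++ (Γ, rep (n + j) A + Δ) :: post, ep)) ∧
    (∀ (d k : ℕ) (pre post : List Cmp) (ep : Option (Cmp × Cmp))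
        (Γ Δ : Multiset Fm) (A : Fm) (n : ℕ), 1 ≤ n →
      EDn Ax true d k (pre ++ (Γ, rep n (Fm.neg A) + Δ) :: post, ep) →
      ∃ j, EDn Ax true d k (pre ++ (Γ + rep (n + j) A, Δ) :: post, ep)) ∧
    (∀ (d k : ℕ) (pre post : List Cmp) (ep : Option (Cmp × Cmp))
        (Γ Δ : Multiset Fm) (A B : Fm) (n : ℕ), 1 ≤ n →
      EDn Ax true d k (pre ++ (Γ + rep n (Fm.imp A B), Δ) :: post, ep) →
      (∃ j, EDn Ax true d k (pre ++ (Γ + rep (n + j) B, Δ) :: post, ep)) ∧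
      (∃ j, EDn Ax true d k (pre ++ (Γ, rep (n + j) A + Δ) :: post, ep))) ∧
    (∀ (d k : ℕ) (pre post : List Cmp) (ep : Option (Cmp × Cmp))
        (Γ Δ : Multiset Fm) (A B : Fm) (n : ℕ), 1 ≤ n →
      EDn Ax true d k (pre ++ (Γ, rep n (Fm.imp A B) + Δ) :: post, ep) →
      ∃ j j', EDn Ax true d k
        (pre ++ (Γ + rep (n + j) A, rep (n + j') B + Δ) :: post, ep)) ∧
    (∀ (d k : ℕ) (pre post : List Cmp) (ep : Option (Cmp × Cmp))
        (Γ Δ : Multiset Fm) (A B : Fm) (n : ℕ), 1 ≤ n →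
      EDn Ax true d k (pre ++ (Γ + rep n (Fm.or A B), Δ) :: post, ep) →
      (∃ j, EDn Ax true d k (pre ++ (Γ + rep (n + j) A, Δ) :: post, ep)) ∧
      (∃ j, EDn Ax true d k (pre ++ (Γ + rep (n + j) B, Δ) :: post, ep))) ∧
    (∀ (d k : ℕ) (pre post : List Cmp) (ep : Option (Cmp × Cmp))
        (Γ Δ : Multiset Fm) (A B : Fm) (n : ℕ), 1 ≤ n →
      EDn Ax true d k (pre ++ (Γ, rep n (Fm.or A B) + Δ) :: post, ep) →
      ∃ j j', EDn Ax true d k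
        (pre ++ (Γ, rep (n + j) A + rep (n + j') B + Δ) :: post, ep)) ∧
    (∀ (d k : ℕ) (pre post : List Cmp) (ep : Option (Cmp × Cmp))
        (Γ Δ : Multiset Fm) (A B : Fm) (n : ℕ), 1 ≤ n →
      EDn Ax true d k (pre ++ (Γ + rep n (Fm.and A B), Δ) :: post, ep) →
      ∃ j j', EDn Ax true d k
        (pre ++ (Γ + rep (n + j) A + rep (n + j') B, Δ) :: post, ep)) ∧
    (∀ (d k : ℕ) (pre post : List Cmp) (ep : Option (Cmp × Cmp))
        (Γ Δ : Multiset Fm) (A B : Fm) (n : ℕ), 1 ≤ n →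
      EDn Ax true d k (pre ++ (Γ, rep n (Fm.and A B) + Δ) :: post, ep) →
      (∃ j, EDn Ax true d k (pre ++ (Γ, rep (n + j) A + Δ) :: post, ep)) ∧
      (∃ j, EDn Ax true d k (pre ++ (Γ, rep (n + j) B + Δ) :: post, ep))) := by
  simp only [rep, ← Multiset.nsmul_singleton]
  refine ⟨fun _ _ _ _ _ _ _ A _ _ h => ?_, fun _ _ _ _ _ _ _ A _ _ h => ?_,
    fun _ _ _ _ _ _ _ A B _ _ h => ⟨?_, ?_⟩, fun _ _ _ _ _ _ _ A B _ _ h => ?_,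
    fun _ _ _ _ _ _ _ A B _ _ h => ⟨?_, ?_⟩, fun _ _ _ _ _ _ _ A B _ _ h => ?_,
    fun _ _ _ _ _ _ _ A B _ _ h => ?_, fun _ _ _ _ _ _ _ A B _ _ h => ⟨?_, ?_⟩⟩
  · simpa using m_invertibility_general (.negL A) (.head _) (by simpa using h)
  · simpa using m_invertibility_general (.negR A) (.head _) (by simpa using h)
  · simpa using m_invertibility_general (.impL A B) (.head _) (by simpa using h)
  · simpa using m_invertibility_general (.impL A B) (.tail _ (.head _)) (by simpa using h)
  · obtain ⟨j, hj⟩ := m_invertibility_general (.impR A B) (.head _) (by simpa using h)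
    exact ⟨j, j, by simpa using hj⟩
  · simpa using m_invertibility_general (.orL A B) (.head _) (by simpa using h)
  · simpa using m_invertibility_general (.orL A B) (.tail _ (.head _)) (by simpa using h)
  · obtain ⟨j, hj⟩ := m_invertibility_general (.orR A B) (.head _) (by simpa using h)
    exact ⟨j, j, by simpa only [nsmul_add, nsmul_zero, add_zero] using hj⟩
  · obtain ⟨j, hj⟩ := m_invertibility_general (.andL A B) (.head _) (by simpa using h)
    exact ⟨j, j, by simpa only [nsmul_add, add_assoc, nsmul_zero, zero_add] using hj⟩
  · simpa using m_invertibility_general (.andR A B) (.head _) (by simpa using h)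
  · simpa using m_invertibility_general (.andR A B) (.tail _ (.head _)) (by simpa using h)
end

section
/- For every 𝒜 ⊆ {M, C, N}, if a linear nested sequent Γ ⇒ Δ (consisting of a single component) is derivable in LNS_E𝒜Con, then it is derivable in the end-active variant of LNS_E𝒜Con. -/
/-- The end-active variant of the calculus `LNS_E𝒜` (optionally with internal
contraction `con` and weakening `wk`): all rule applications are restricted so
that the active components are the rightmost ones.  The modal rules are always
end-active; the propositional and structural rules are restricted to the last
component. -/
inductive EDe (Ax : EAx) (con wk : Bool) : LNSe → Prop
  | init {pre : List Cmp} {Γ Δ : Multiset Fm} {m : ℕ} :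
      EDe Ax con wk (pre ++ [(Fm.var m ::ₘ Γ, Fm.var m ::ₘ Δ)], none)
  | botL {pre Γ Δ} :
      EDe Ax con wk (pre ++ [(Fm.bot ::ₘ Γ, Δ)], none)
  | topR {pre Γ Δ} :
      EDe Ax con wk (pre ++ [(Γ, Fm.top ::ₘ Δ)], none)
  | negL {pre Γ Δ A} :
      EDe Ax con wk (pre ++ [(Γ, A ::ₘ Δ)], none) →
      EDe Ax con wk (pre ++ [(Fm.neg A ::ₘ Γ, Δ)], none)
  | negR {pre Γ Δ A} :
      EDe Ax con wk (pre ++ [(A ::ₘ Γ, Δ)], none) →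
      EDe Ax con wk (pre ++ [(Γ, Fm.neg A ::ₘ Δ)], none)
  | andL {pre Γ Δ A B} :
      EDe Ax con wk (pre ++ [(A ::ₘ B ::ₘ Γ, Δ)], none) →
      EDe Ax con wk (pre ++ [(Fm.and A B ::ₘ Γ, Δ)], none)
  | andR {pre Γ Δ A B} :
      EDe Ax con wk (pre ++ [(Γ, A ::ₘ Δ)], none) →
      EDe Ax con wk (pre ++ [(Γ, B ::ₘ Δ)], none) →
      EDe Ax con wk (pre ++ [(Γ, Fm.and A B ::ₘ Δ)], none)
  | orL {pre Γ Δ A B} :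
      EDe Ax con wk (pre ++ [(A ::ₘ Γ, Δ)], none) →
      EDe Ax con wk (pre ++ [(B ::ₘ Γ, Δ)], none) →
      EDe Ax con wk (pre ++ [(Fm.or A B ::ₘ Γ, Δ)], none)
  | orR {pre Γ Δ A B} :
      EDe Ax con wk (pre ++ [(Γ, A ::ₘ B ::ₘ Δ)], none) →
      EDe Ax con wk (pre ++ [(Γ, Fm.or A B ::ₘ Δ)], none)
  | impL {pre Γ Δ A B} :
      EDe Ax con wk (pre ++ [(B ::ₘ Γ, Δ)], none) →
      EDe Ax con wk (pre ++ [(Γ, A ::ₘ Δ)], none) →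
      EDe Ax con wk (pre ++ [(Fm.imp A B ::ₘ Γ, Δ)], none)
  | impR {pre Γ Δ A B} :
      EDe Ax con wk (pre ++ [(A ::ₘ Γ, B ::ₘ Δ)], none) →
      EDe Ax con wk (pre ++ [(Γ, Fm.imp A B ::ₘ Δ)], none)
  | conL {pre Γ Δ A} : con = true →
      EDe Ax con wk (pre ++ [(A ::ₘ A ::ₘ Γ, Δ)], none) →
      EDe Ax con wk (pre ++ [(A ::ₘ Γ, Δ)], none)
  | conR {pre Γ Δ A} : con = true →
      EDe Ax con wk (pre ++ [(Γ, A ::ₘ A ::ₘ Δ)], none) →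
      EDe Ax con wk (pre ++ [(Γ, A ::ₘ Δ)], none)
  | wkL {pre Γ Δ A} : wk = true →
      EDe Ax con wk (pre ++ [(Γ, Δ)], none) →
      EDe Ax con wk (pre ++ [(A ::ₘ Γ, Δ)], none)
  | wkR {pre Γ Δ A} : wk = true →
      EDe Ax con wk (pre ++ [(Γ, Δ)], none) →
      EDe Ax con wk (pre ++ [(Γ, A ::ₘ Δ)], none)
  | boxRe {G Γ Δ B} :
      EDe Ax con wk (G ++ [(Γ, Δ)], some ((0, {B}), ({B}, 0))) →
      EDe Ax con wk (G ++ [(Γ, Fm.box B ::ₘ Δ)], none)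
  | boxLe {G Γ Δ Sg Pp Om Th A} :
      EDe Ax con wk (G ++ [(Γ, Δ), (A ::ₘ Sg, Pp)], none) →
      EDe Ax con wk (G ++ [(Γ, Δ), (Om, A ::ₘ Th)], none) →
      EDe Ax con wk (G ++ [(Fm.box A ::ₘ Γ, Δ)], some ((Sg, Pp), (Om, Th)))
  | ruleN {G Γ Δ B} : Ax.n = true →
      EDe Ax con wk (G ++ [(Γ, Δ), (0, {B})], none) →
      EDe Ax con wk (G ++ [(Γ, Fm.box B ::ₘ Δ)], none)
  | ruleM {c G Sg Pp Om Th} : Ax.m = true →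
      EDe Ax con wk (c :: G, some ((Sg, Pp), (Fm.bot ::ₘ Om, Th))) →
      EDe Ax con wk (c :: G, some ((Sg, Pp), (Om, Th)))
  | ruleC {G Γ Δ Sg Pp Om Th A} : Ax.c = true →
      EDe Ax con wk (G ++ [(Γ, Δ)], some ((A ::ₘ Sg, Pp), (Om, Th))) →
      EDe Ax con wk (G ++ [(Γ, Δ), (Om, A ::ₘ Th)], none) →
      EDe Ax con wk (G ++ [(Fm.box A ::ₘ Γ, Δ)], some ((Sg, Pp), (Om, Th)))

/-!
In an end-active derivation the components to the left of the last one are inert. They may therefore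
be exchanged at will, and weakening of the last component is admissible even when it is not a rule.
So it is enough to see that a derivable linear nested sequent has a component which, taken alone, is
derivable end-actively.

A rule applied to the last component while a binary nesting `⫽ᵉ` is open has to be permuted: an
end-active derivation must postpone it until the nesting has been discharged into a component. Hence
the invariant for a sequent ending in `⫽ᵉ` quantifies over all the `D` which discharging that
nesting can add to the last component. Propositional rules act on the component extended by `D`,
and the modal rules merely change the set of admissible `D`.
-/

theorem cons_left_eq_add {α β : Type*} (a : α) (s : Multiset α) (t : Multiset β) :
    (a ::ₘ s, t) = (s, t) + ({a}, 0) := by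
  simp only [Prod.mk_add_mk, add_zero, add_comm s, Multiset.singleton_add]

theorem cons_right_eq_add {α β : Type*} (b : β) (s : Multiset α) (t : Multiset β) :
    (s, b ::ₘ t) = (s, t) + (0, {b}) := by
  simp only [Prod.mk_add_mk, add_zero, add_comm t, Multiset.singleton_add]

theorem exists_modifyLast_add {M : Type*} [AddZeroClass M] (pre post : List M) (x : M) :
    ∃ y post', ∀ a, (pre ++ a :: post).modifyLast (· + x) = pre ++ (a + y) :: post' := by
  rcases List.eq_nil_or_concat post with rfl | ⟨post, b, rfl⟩
  · exact ⟨x, [], fun a => List.modifyLast_concat _ _ _⟩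
  · refine ⟨0, post ++ [b + x], fun a => ?_⟩
    rw [List.concat_eq_append, ← List.cons_append, ← List.append_assoc, List.modifyLast_concat,
      List.append_assoc, List.cons_append, add_zero]

section

variable {Ax : EAx} {con wk : Bool} {G pre post : List Cmp} {ep : Option (Cmp × Cmp)}
  {L : List Cmp} {c c₁ c₂ D : Cmp} {Γ Δ Sg Pp Om Th : Multiset Fm} {A B : Fm}

theorem EDe.ruleM_concat (hM : Ax.m = true)
    (h : EDe Ax con wk (G ++ [c], some ((Sg, Pp), (Fm.bot ::ₘ Om, Th)))) :
    EDe Ax con wk (G ++ [c], some ((Sg, Pp), (Om, Th))) := by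
  cases G <;> exact .ruleM hM h

-- Taking `getLast?` instead of writing `s.1 = G ++ [c]` keeps the index free for the induction.
theorem EDe.relocate_getLast? {s : LNSe} (h : EDe Ax con wk s) (pre : List Cmp)
    (X Y : Multiset Fm) :
    EDe Ax con wk (pre ++ s.1.getLast?.toList.map (· + (X, Y)), s.2) := by
  induction h generalizing pre X Y with
    simp only [List.getLast?_append_cons, List.getLast?_cons_cons, List.getLast?_singleton,
      Option.toList_some, List.map_cons, List.map_nil, Prod.mk_add_mk, Multiset.cons_add] at *
  | init => exact .init
  | botL => exact .botL
  | topR => exact .topR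
  | negL _ ih => exact .negL (ih pre X Y)
  | negR _ ih => exact .negR (ih pre X Y)
  | andL _ ih => exact .andL (ih pre X Y)
  | andR _ _ ihA ihB => exact .andR (ihA pre X Y) (ihB pre X Y)
  | orL _ _ ihA ihB => exact .orL (ihA pre X Y) (ihB pre X Y)
  | orR _ ih => exact .orR (ih pre X Y)
  | impL _ _ ihB ihA => exact .impL (ihB pre X Y) (ihA pre X Y)
  | impR _ ih => exact .impR (ih pre X Y)
  | conL hcon _ ih => exact .conL hcon (ih pre X Y)
  | conR hcon _ ih => exact .conR hcon (ih pre X Y)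
  | wkL hwk _ ih => exact .wkL hwk (ih pre X Y)
  | wkR hwk _ ih => exact .wkR hwk (ih pre X Y)
  | boxRe _ ih => exact .boxRe (ih pre X Y)
  | @boxLe _ Γ Δ _ _ _ _ _ _ _ ihL ihR =>
    exact .boxLe (by simpa using ihL (pre ++ [(Γ + X, Δ + Y)]) 0 0)
      (by simpa using ihR (pre ++ [(Γ + X, Δ + Y)]) 0 0)
  | @ruleN _ Γ Δ _ hN _ ih => exact .ruleN hN (by simpa using ih (pre ++ [(Γ + X, Δ + Y)]) 0 0)
  | ruleM hM _ ih =>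
    simp only [List.getLast?_cons, Option.toList_some, List.map_cons, List.map_nil] at ih ⊢
    exact .ruleM_concat hM (ih pre X Y)
  | @ruleC _ Γ Δ _ _ _ _ _ hC _ _ ihL ihR =>
    exact .ruleC hC (ihL pre X Y) (by simpa using ihR (pre ++ [(Γ + X, Δ + Y)]) 0 0)

theorem EDe.relocate (h : EDe Ax con wk (G ++ [c], ep)) (pre : List Cmp) (D : Cmp) :
    EDe Ax con wk (pre ++ [c + D], ep) := by
  simpa only [List.getLast?_append_cons, List.getLast?_singleton, Option.toList_some,
    List.map_cons, List.map_nil] using h.relocate_getLast? pre D.1 D.2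

theorem EDe.prepend (h : EDe Ax con wk ([c], ep)) (pre : List Cmp) :
    EDe Ax con wk (pre ++ [c], ep) := by
  simpa only [add_zero] using EDe.relocate (G := []) h pre 0

theorem EDe.weaken (h : EDe Ax con wk ([c], ep)) (D : Cmp) : EDe Ax con wk ([c + D], ep) :=
  EDe.relocate (G := []) h [] D

/-- `L` has a component which, as a linear nested sequent of its own, is derivable in the
end-active calculus: the reading of a linear nested sequent as a disjunction of its components. -/
def HasDerivableComponent (Ax : EAx) (con wk : Bool) (L : List Cmp) : Prop :=
  ∃ c ∈ L, EDe Ax con wk ([c], none)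

theorem hasDerivableComponent_append_cons :
    HasDerivableComponent Ax con wk (pre ++ c :: post) ↔
      HasDerivableComponent Ax con wk pre ∨ EDe Ax con wk ([c], none) ∨
        HasDerivableComponent Ax con wk post := by
  simp only [HasDerivableComponent, List.mem_append, List.mem_cons, or_and_right, exists_or,
    exists_eq_left]

theorem hasDerivableComponent_concat :
    HasDerivableComponent Ax con wk (G ++ [c]) ↔
      HasDerivableComponent Ax con wk G ∨ EDe Ax con wk ([c], none) := by
  simp [HasDerivableComponent, or_and_right, exists_or]

theorem HasDerivableComponent.weaken_last (h : HasDerivableComponent Ax con wk (G ++ [c]))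
    (D : Cmp) : HasDerivableComponent Ax con wk (G ++ [c + D]) := by
  rw [hasDerivableComponent_concat] at h ⊢
  exact h.imp_right (·.weaken D)

/-- The terminating nesting `ep` can be discharged into `D`: whenever a single component followed
by `ep` is derivable end-actively, so is that component extended by `D`, with no nesting left.
For instance, `□_R^e` discharges the nesting `⫽ᵉ( ⇒ B; B ⇒ )` into ` ⇒ □B`. -/
def Discharges (Ax : EAx) (con wk : Bool) (ep : Option (Cmp × Cmp)) (D : Cmp) : Prop :=
  ∀ c, EDe Ax con wk ([c], ep) → EDe Ax con wk ([c + D], none)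

theorem discharges_none (D : Cmp) : Discharges Ax con wk none D := fun _ h => h.weaken D

theorem discharges_boxRe (B : Fm) :
    Discharges Ax con wk (some ((0, {B}), ({B}, 0))) (0, {B.box}) := by
  rintro ⟨Γ, Δ⟩ h
  rw [← cons_right_eq_add]
  exact .boxRe (G := []) h

theorem Discharges.ruleM (hM : Ax.m = true)
    (hD : Discharges Ax con wk (some ((Sg, Pp), (Om, Th))) D) :
    Discharges Ax con wk (some ((Sg, Pp), (Fm.bot ::ₘ Om, Th))) D :=
  fun c h => hD c (.ruleM hM h)

theorem Discharges.ruleC (hC : Ax.c = true)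
    (hD : Discharges Ax con wk (some ((Sg, Pp), (Om, Th))) D)
    (hA : EDe Ax con wk ([(Om, A ::ₘ Th)], none)) :
    Discharges Ax con wk (some ((A ::ₘ Sg, Pp), (Om, Th))) (({A.box}, 0) + D) := by
  rintro ⟨Γ, Δ⟩ h
  rw [← add_assoc, ← cons_left_eq_add]
  exact hD _ (.ruleC (G := []) hC h (hA.prepend [(Γ, Δ)]))

/-- The invariant of derivations in the unrestricted calculus. However the terminating nesting of
`s` is discharged, the sequent with the result added to its last component has a component
derivable end-actively on its own. -/
def Localizes (Ax : EAx) (con wk : Bool) (s : LNSe) : Prop :=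
  ∀ D, Discharges Ax con wk s.2 D → HasDerivableComponent Ax con wk (s.1.modifyLast (· + D))

theorem localizes_concat :
    Localizes Ax con wk (G ++ [c], ep) ↔
      ∀ D, Discharges Ax con wk ep D → HasDerivableComponent Ax con wk (G ++ [c + D]) := by
  simp only [Localizes, List.modifyLast_concat]

theorem localizes_none : Localizes Ax con wk (L, none) ↔ HasDerivableComponent Ax con wk L := by
  rcases List.eq_nil_or_concat L with rfl | ⟨G, c, rfl⟩
  · exact ⟨fun h => h 0 (discharges_none 0), fun h _ _ => h⟩
  · rw [List.concat_eq_append, localizes_concat]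
    refine ⟨fun h => ?_, fun h D _ => h.weaken_last D⟩
    simpa only [add_zero] using h 0 (discharges_none 0)

theorem localizes_none_concat_concat :
    Localizes Ax con wk (G ++ [c₁, c₂], none) ↔
      HasDerivableComponent Ax con wk (G ++ [c₁]) ∨ EDe Ax con wk ([c₂], none) := by
  rw [localizes_none, List.append_cons, hasDerivableComponent_concat]

theorem Localizes.binary_rule
    (h₁ : Localizes Ax con wk (pre ++ c₁ :: post, ep))
    (h₂ : Localizes Ax con wk (pre ++ c₂ :: post, ep))
    (rule : ∀ D, EDe Ax con wk ([c₁ + D], none) → EDe Ax con wk ([c₂ + D], none) →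
      EDe Ax con wk ([c + D], none)) :
    Localizes Ax con wk (pre ++ c :: post, ep) := by
  intro D hD
  obtain ⟨E, post', hE⟩ := exists_modifyLast_add pre post D
  have h₁ := h₁ D hD
  have h₂ := h₂ D hD
  simp only [hE, hasDerivableComponent_append_cons] at h₁ h₂ ⊢
  have rule_add_E := rule E
  tauto

theorem Localizes.unary_rule
    (h : Localizes Ax con wk (pre ++ c₁ :: post, ep))
    (rule : ∀ D, EDe Ax con wk ([c₁ + D], none) → EDe Ax con wk ([c + D], none)) :
    Localizes Ax con wk (pre ++ c :: post, ep) :=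
  .binary_rule h h fun D h₁ _ => rule D h₁

theorem Localizes.of_derivable (h : EDe Ax con wk ([c], none)) :
    Localizes Ax con wk (pre ++ c :: post, ep) := by
  intro D _
  obtain ⟨E, post', hE⟩ := exists_modifyLast_add pre post D
  simp only [hE, hasDerivableComponent_append_cons]
  exact .inr (.inl (h.weaken E))

theorem Localizes.boxRe (h : Localizes Ax con wk (G ++ [(Γ, Δ)], some ((0, {B}), ({B}, 0)))) :
    Localizes Ax con wk (G ++ [(Γ, B.box ::ₘ Δ)], none) := by
  rw [localizes_none, cons_right_eq_add]
  exact localizes_concat.1 h _ (discharges_boxRe B)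

theorem Localizes.boxLe (hL : Localizes Ax con wk (G ++ [(Γ, Δ), (A ::ₘ Sg, Pp)], none))
    (hR : Localizes Ax con wk (G ++ [(Γ, Δ), (Om, A ::ₘ Th)], none)) :
    Localizes Ax con wk (G ++ [(A.box ::ₘ Γ, Δ)], some ((Sg, Pp), (Om, Th))) := by
  refine localizes_concat.2 fun D hD => ?_
  have of_left (h : HasDerivableComponent Ax con wk (G ++ [(Γ, Δ)])) :
      HasDerivableComponent Ax con wk (G ++ [(A.box ::ₘ Γ, Δ) + D]) := by
    rw [cons_left_eq_add]
    exact (h.weaken_last _).weaken_last D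
  rcases localizes_none_concat_concat.1 hL with h | hL
  · exact of_left h
  rcases localizes_none_concat_concat.1 hR with h | hR
  · exact of_left h
  · exact hasDerivableComponent_concat.2 <| .inr <| hD _ <|
      .boxLe (G := []) (hL.prepend [(Γ, Δ)]) (hR.prepend [(Γ, Δ)])

theorem Localizes.ruleN (hN : Ax.n = true)
    (h : Localizes Ax con wk (G ++ [(Γ, Δ), (0, {B})], none)) :
    Localizes Ax con wk (G ++ [(Γ, B.box ::ₘ Δ)], none) := by
  rw [localizes_none]
  rcases localizes_none_concat_concat.1 h with h | hB
  · rw [cons_right_eq_add]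
    exact h.weaken_last _
  · exact hasDerivableComponent_concat.2 <| .inr <| .ruleN (G := []) hN (hB.prepend [(Γ, Δ)])

theorem Localizes.ruleM (hM : Ax.m = true)
    (h : Localizes Ax con wk (L, some ((Sg, Pp), (Fm.bot ::ₘ Om, Th)))) :
    Localizes Ax con wk (L, some ((Sg, Pp), (Om, Th))) :=
  fun D hD => h D (hD.ruleM hM)

theorem Localizes.ruleC (hC : Ax.c = true)
    (hL : Localizes Ax con wk (G ++ [(Γ, Δ)], some ((A ::ₘ Sg, Pp), (Om, Th))))
    (hR : Localizes Ax con wk (G ++ [(Γ, Δ), (Om, A ::ₘ Th)], none)) :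
    Localizes Ax con wk (G ++ [(A.box ::ₘ Γ, Δ)], some ((Sg, Pp), (Om, Th))) := by
  refine localizes_concat.2 fun D hD => ?_
  rw [cons_left_eq_add, add_assoc]
  rcases localizes_none_concat_concat.1 hR with h | hA
  · exact h.weaken_last _
  · exact localizes_concat.1 hL _ (hD.ruleC hC hA)

theorem ED.localizes {s : LNSe} (h : ED Ax con wk s) : Localizes Ax con wk s := by
  induction h with
  | init => exact .of_derivable (.init (pre := []))
  | botL => exact .of_derivable (.botL (pre := []))
  | topR => exact .of_derivable (.topR (pre := []))
  | negL _ ih => exact ih.unary_rule fun ⟨_, _⟩ => by simpa using EDe.negL (pre := [])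
  | negR _ ih => exact ih.unary_rule fun ⟨_, _⟩ => by simpa using EDe.negR (pre := [])
  | andL _ ih => exact ih.unary_rule fun ⟨_, _⟩ => by simpa using EDe.andL (pre := [])
  | andR _ _ ihA ihB => exact ihA.binary_rule ihB fun ⟨_, _⟩ => by simpa using EDe.andR (pre := [])
  | orL _ _ ihA ihB => exact ihA.binary_rule ihB fun ⟨_, _⟩ => by simpa using EDe.orL (pre := [])
  | orR _ ih => exact ih.unary_rule fun ⟨_, _⟩ => by simpa using EDe.orR (pre := [])
  | impL _ _ ihB ihA => exact ihB.binary_rule ihA fun ⟨_, _⟩ => by simpa using EDe.impL (pre := [])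
  | impR _ ih => exact ih.unary_rule fun ⟨_, _⟩ => by simpa using EDe.impR (pre := [])
  | conL hcon _ ih => exact ih.unary_rule fun ⟨_, _⟩ => by simpa using EDe.conL (pre := []) hcon
  | conR hcon _ ih => exact ih.unary_rule fun ⟨_, _⟩ => by simpa using EDe.conR (pre := []) hcon
  | wkL hwk _ ih => exact ih.unary_rule fun ⟨_, _⟩ => by simpa using EDe.wkL (pre := []) hwk
  | wkR hwk _ ih => exact ih.unary_rule fun ⟨_, _⟩ => by simpa using EDe.wkR (pre := []) hwk
  | boxRe _ ih => exact ih.boxRe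
  | boxLe _ _ ihL ihR => exact ihL.boxLe ihR
  | ruleN hN _ ih => exact ih.ruleN hN
  | ruleM hM _ ih => exact ih.ruleM hM
  | ruleC hC _ _ ihL ihR => exact ihL.ruleC hC ihR

end

theorem LNSeCon_to_endActive_general (Ax : EAx) (con wk : Bool) (L : List Cmp)
    (h : ED Ax con wk (L, none)) : ∃ c ∈ L, EDe Ax con wk ([c], none) :=
  localizes_none.1 h.localizes

/-- If a linear nested sequent `Γ ⇒ Δ` consisting of a single component is
derivable in `LNS_E𝒜Con`, then it is derivable in the end-active variant of
`LNS_E𝒜Con` (for every `𝒜 ⊆ {M, C, N}`). -/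
theorem LNSeCon_to_endActive (Ax : EAx) (Γ Δ : Multiset Fm)
    (h : ED Ax true false ([(Γ, Δ)], none)) :
    EDe Ax true false ([(Γ, Δ)], none) := by
  simpa only [List.mem_singleton, exists_eq_left] using
    LNSeCon_to_endActive_general Ax true false [(Γ, Δ)] h
end
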